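/- Let $X$ be a projective K3 surface over an algebraically closed field $k$, and let $c_X\in \mathrm{CH}^2(X)$ be its Beauville–Voisin class, i.e. the class of a closed point which is represented by every closed point lying on a rational curve in $X$. Here a curve $C\subset X$ is a non-empty closed subscheme all of whose irreducible components have dimension one; its integral components are its irreducible components with their reduced structure, and $C$ is rational if the normalization of each integral component is isomorphic to $\mathbb{P}^1_k$. For an integral curve $W\subset X$ with generic point $\eta_W$, let $\kappa_W\in \mathrm{CH}^2(X\times_k k(\eta_W))$ be the class of the restriction of the cycle $\Delta_W-\{x_0\}\times W$ on $X\times W$ to the generic fibre of $X\times W\to W$, where $\Delta_W$ is the graph of the inclusion $W\subset X$ and $x_0\in X$ is any closed point with $[x_0]=c_X$. A curve $C\subset X$ is a constant cycle curve if $\kappa_W$ is torsion for every integral component $W$ of $C$, and its order is then the maximum of the orders of these classes $\kappa_W$. Every rational curve $C\subset X$ is a constant cycle curve of order one (for every choice of $x_0$). -/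

import Mathlib

universe u

open CategoryTheory CategoryTheory.Limits AlgebraicGeometry

namespace K3CCC

noncomputable section

/-! ### Projective space -/

attribute [local instance] MvPolynomial.gradedAlgebra

/-- Projective `n`-space `ℙⁿ_k = Proj k[x₀, …, xₙ]`. -/
def projSpace (n : ℕ) (k : Type u) [Field k] : Scheme.{u} :=
  Proj (MvPolynomial.homogeneousSubmodule (Fin (n + 1)) k)

/-- The structure morphism `ℙⁿ_k ⟶ Spec k`. -/
def projSpaceStr (n : ℕ) (k : Type u) [Field k] : projSpace n k ⟶ Spec (.of k) :=
  Proj.toSpecZero (MvPolynomial.homogeneousSubmodule (Fin (n + 1)) k) ≫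
    Spec.map (CommRingCat.ofHom (algebraMap k
      (MvPolynomial.homogeneousSubmodule (Fin (n + 1)) k 0)))

/-! ### K3 surfaces -/

/-- For a tower `k → A → B` of commutative rings, the natural map
`⋀²_A Ω_{A/k} → ⋀²_B Ω_{B/k}`, `a · dx ∧ dy ↦ a · dx ∧ dy`. -/
def twoFormMap (k A B : Type u) [CommRing k] [CommRing A] [CommRing B] [Algebra k A]
    [Algebra k B] [Algebra A B] [IsScalarTower k A B] :
    (⋀[A]^2 (Ω[A⁄k])) →ₗ[A] (⋀[B]^2 (Ω[B⁄k])) :=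
  exteriorPower.alternatingMapLinearEquiv
    { ((exteriorPower.ιMulti B 2 (M := Ω[B⁄k])).toMultilinearMap.restrictScalars A).compLinearMap
        (fun _ => KaehlerDifferential.map k k A B) with
      map_eq_zero_of_eq' := fun _ _ _ hv hij =>
        (exteriorPower.ιMulti B 2 (M := Ω[B⁄k])).map_eq_zero_of_eq _
          (congrArg (KaehlerDifferential.map k k A B) hv) hij }

variable {k : Type u} [Field k] {X : Scheme.{u}}

/-- The ring homomorphism `k → Γ(X, U)` of a `k`-scheme `X`. -/
def scalars (f : X ⟶ Spec (.of k)) (U : X.Opens) : k →+* Γ(X, U) :=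
  ((Scheme.ΓSpecIso (.of k)).inv ≫ f.appLE ⊤ U (by rw [Scheme.Hom.preimage_top]; exact le_top)).hom

lemma scalars_comp (f : X ⟶ Spec (.of k)) {U V : X.Opens} (h : V ≤ U) :
    scalars f V = (X.presheaf.map (homOfLE h).op).hom.comp (scalars f U) := by
  unfold scalars
  rw [← Scheme.Hom.appLE_map f (U := ⊤) (V := U) (by rw [Scheme.Hom.preimage_top]; exact le_top)
    (homOfLE h).op]
  rfl

/-- The ring `Γ(X, U)`, regarded as a `k`-algebra through `f : X ⟶ Spec k`. -/
def Sections (_f : X ⟶ Spec (.of k)) (U : X.Opens) : Type u := Γ(X, U)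

instance (f : X ⟶ Spec (.of k)) (U : X.Opens) : CommRing (Sections f U) :=
  inferInstanceAs (CommRing Γ(X, U))

instance (f : X ⟶ Spec (.of k)) (U : X.Opens) : Algebra k (Sections f U) :=
  RingHom.toAlgebra (S := Sections f U) (scalars f U)

/-- The restriction homomorphism `Γ(X, U) → Γ(X, V)` for `V ⊆ U`. -/
def Sections.res (f : X ⟶ Spec (.of k)) {U V : X.Opens} (h : V ≤ U) :
    Sections f U →+* Sections f V :=
  (X.presheaf.map (homOfLE h).op).hom

/-- The module of `2`-forms `⋀² Ω_{Γ(X, U)/k}`; for `U` affine these are the sections over `U`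
of the sheaf `⋀² Ω_{X/k}`. -/
abbrev TwoForms (f : X ⟶ Spec (.of k)) (U : X.Opens) : Type u :=
  ↥(⋀[Sections f U]^2 (Ω[Sections f U⁄k]))

/-- Restriction of `2`-forms from `U` to `V ⊆ U`. -/
def TwoForms.res (f : X ⟶ Spec (.of k)) {U V : X.Opens} (h : V ≤ U) (s : TwoForms f U) :
    TwoForms f V :=
  letI : Algebra (Sections f U) (Sections f V) := (Sections.res f h).toAlgebra
  haveI : IsScalarTower k (Sections f U) (Sections f V) :=
    .of_algebraMap_eq' (scalars_comp f h)
  twoFormMap k (Sections f U) (Sections f V) s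

/-- Triviality of the canonical bundle `ω_X = ⋀² Ω_{X/k}` of a smooth surface: there is a global
`2`-form (a compatible family of `2`-forms on the affine opens) which is a basis of the
`2`-forms on every affine open, i.e. which defines an isomorphism `𝒪_X ≅ ω_X`. -/
def TrivialCanonicalBundle (f : X ⟶ Spec (.of k)) : Prop :=
  ∃ s : ∀ U : X.affineOpens, TwoForms f U.1,
    (∀ (U V : X.affineOpens) (h : V.1 ≤ U.1), TwoForms.res f h (s U) = s V) ∧
    ∀ U : X.affineOpens, Function.Bijective fun a : Sections f U.1 => a • s U

/-- The structure sheaf of `X` as a sheaf of abelian groups on the Zariski site of `X`. -/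
def structureSheafAb (X : Scheme.{u}) :
    Sheaf (Opens.grothendieckTopology X) AddCommGrpCat.{u} :=
  (sheafCompose _ (forget₂ CommRingCat.{u} RingCat.{u} ⋙ forget₂ RingCat.{u} AddCommGrpCat.{u})).obj
    X.sheaf

/-- A projective K3 surface over a field `k`: an integral smooth projective surface `X` over `k`
with trivial canonical bundle and `H¹(X, 𝒪_X) = 0`. -/
class IsProjectiveK3 (f : X ⟶ Spec (.of k)) : Prop where
  isIntegral : IsIntegral X
  smooth : SmoothOfRelativeDimension 2 f
  projective : ∃ (n : ℕ) (i : X ⟶ projSpace n k), IsClosedImmersion i ∧ i ≫ projSpaceStr n k = f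
  trivialCanonicalBundle : TrivialCanonicalBundle f
  h1_eq_zero : Subsingleton ((structureSheafAb X).H 1)

instance (n : ℕ) (k : Type u) [Field k] : IsSeparated (projSpaceStr n k) := by
  have : IsSeparated (Proj.toSpecZero (MvPolynomial.homogeneousSubmodule (Fin (n + 1)) k)) :=
    Proj.isSeparated _
  exact MorphismProperty.comp_mem _ _ _ this inferInstance

instance (f : X ⟶ Spec (.of k)) [hf : IsProjectiveK3 f] : IsSeparated f := by
  obtain ⟨n, i, hi, rfl⟩ := hf.projective
  infer_instance

instance (f : X ⟶ Spec (.of k)) [hf : IsProjectiveK3 f] : LocallyOfFiniteType f := by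
  have := hf.smooth
  have : Smooth f := SmoothOfRelativeDimension.smooth 2 f
  infer_instance

/-! ### The Chow group of zero-cycles

For a surface `Y` the codimension two cycles are the zero-cycles, and `CH²(Y) = CH₀(Y)`. -/

/-- Zero-cycles on `Y`: the free abelian group on the closed points of `Y`. -/
abbrev ZeroCycle (Y : Scheme.{u}) : Type u := closedPoints Y →₀ ℤ

/-- The image of a closed point under a finite morphism. -/
def mapClosedPoint {T Y : Scheme.{u}} (g : T ⟶ Y) [IsFinite g] (t : closedPoints T) :
    closedPoints Y :=
  ⟨g t.1, by
    have h := g.isClosedMap _ (mem_closedPoints_iff.1 t.2)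
    rw [Set.image_singleton] at h
    exact mem_closedPoints_iff.2 h⟩

/-- Push-forward of zero-cycles along a finite morphism, `g_*[t] = [κ(t) : κ(g t)] · [g t]`. -/
def ZeroCycle.pushforward {T Y : Scheme.{u}} (g : T ⟶ Y) [IsFinite g] :
    ZeroCycle T →+ ZeroCycle Y :=
  Finsupp.liftAddHom fun t =>
    g.residueDegree t.1 • Finsupp.singleAddHom (mapClosedPoint g t)

/-- `D` is the divisor `div φ = ∑ ord_t(φ) · [t]` of the rational function `φ` on the integral
curve `T`. -/
def IsDivisorOf {T : Scheme.{u}} [IsIntegral T] [IsLocallyNoetherian T]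
    (D : ZeroCycle T) (φ : T.functionField) : Prop :=
  ∀ t : closedPoints T, D t = Scheme.ord φ t.1

/-- The subgroup of zero-cycles on `Y` that are rationally equivalent to zero: it is generated by
the cycles `g_*(div φ)` for integral curves `T`, finite morphisms `g : T ⟶ Y` (such as the inclusion
of an integral closed curve in `Y`, or its normalization) and rational functions `φ ≠ 0` on `T`. -/
def ratEquivZero (Y : Scheme.{u}) : AddSubgroup (ZeroCycle Y) :=
  AddSubgroup.closure
    {c | ∃ (T : Scheme.{u}) (_ : IsIntegral T) (_ : IsLocallyNoetherian T)
        (g : T ⟶ Y) (_ : IsFinite g) (φ : T.functionField) (D : ZeroCycle T),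
        topologicalKrullDim T = 1 ∧ φ ≠ 0 ∧ IsDivisorOf D φ ∧ c = ZeroCycle.pushforward g D}

/-- The Chow group `CH₀(Y)` of zero-cycles modulo rational equivalence; it is `CH²(Y)` for
a surface `Y`. -/
abbrev CH₀ (Y : Scheme.{u}) : Type u := ZeroCycle Y ⧸ ratEquivZero Y

/-- The class `[y] ∈ CH₀(Y)` of a closed point. -/
def CH₀.cls {Y : Scheme.{u}} (y : closedPoints Y) : CH₀ Y :=
  QuotientAddGroup.mk (Finsupp.single y 1)

/-! ### Curves, rational curves, the Beauville–Voisin class -/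

/-- `i : C ⟶ X` is (the inclusion of) a curve: a nonempty closed subscheme all of whose irreducible
components have dimension one. -/
structure IsCurve {C : Scheme.{u}} (i : C ⟶ X) : Prop where
  isClosedImmersion : IsClosedImmersion i
  nonempty : Nonempty C
  dim_eq_one : ∀ Z ∈ irreducibleComponents C, topologicalKrullDim Z = 1

/-- `j : W ⟶ C` is (the inclusion of) an integral component of `C`: an irreducible component with
its reduced scheme structure. -/
structure IsIntegralComponent {W C : Scheme.{u}} (j : W ⟶ C) : Prop where
  isIntegral : IsIntegral W
  isClosedImmersion : IsClosedImmersion j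
  range_mem : Set.range j ∈ irreducibleComponents C

/-- The inclusion `Spec k(η_W) ⟶ W` of the generic point of an integral scheme `W`. -/
def genericPointInclusion (W : Scheme.{u}) [IsIntegral W] : Spec W.functionField ⟶ W :=
  W.fromSpecStalk (genericPoint W)

/-- The normalization of the integral `k`-scheme `p : W ⟶ Spec k`, i.e. the normalization of `W`
in its generic point, is isomorphic over `k` to the projective line. -/
def HasNormalizationP1 {W : Scheme.{u}} [IsIntegral W] (p : W ⟶ Spec (.of k))
    [QuasiSeparated p] : Prop :=
  haveI : QuasiSeparatedSpace W := (quasiSeparated_iff_quasiSeparatedSpace p).1 inferInstance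
  haveI : QuasiCompact (genericPointInclusion W) := inferInstance
  haveI : QuasiSeparated (genericPointInclusion W) := inferInstance
  ∃ e : (genericPointInclusion W).normalization ≅ projSpace 1 k,
    e.hom ≫ projSpaceStr 1 k = (genericPointInclusion W).fromNormalization ≫ p

/-- `i : C ⟶ X` is a rational curve in the `k`-scheme `f : X ⟶ Spec k`: a curve such that the
normalization of every integral component is a projective line. -/
structure IsRationalCurve (f : X ⟶ Spec (.of k)) [IsSeparated f] {C : Scheme.{u}} (i : C ⟶ X) :
    Prop where
  isCurve : IsCurve i
  normalization : ∀ (W : Scheme.{u}) (j : W ⟶ C) (hj : IsIntegralComponent j),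
    haveI := hj.isIntegral
    haveI := hj.isClosedImmersion
    haveI := isCurve.isClosedImmersion
    HasNormalizationP1 (j ≫ i ≫ f)

/-- `c ∈ CH₀(X) = CH²(X)` is the Beauville–Voisin class: the class of a closed point which is
represented by every closed point lying on a rational curve in `X`. -/
structure IsBeauvilleVoisinClass (f : X ⟶ Spec (.of k)) [IsSeparated f] (c : CH₀ X) : Prop where
  exists_point : ∃ x : closedPoints X, CH₀.cls x = c
  eq_of_rational : ∀ (C : Scheme.{u}) (i : C ⟶ X), IsRationalCurve f i →
    ∀ x : closedPoints X, x.1 ∈ Set.range i → CH₀.cls x = c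

/-- The Beauville–Voisin class is unique as soon as `X` contains a rational curve. -/
lemma IsBeauvilleVoisinClass.unique {f : X ⟶ Spec (.of k)} [IsSeparated f]
    [LocallyOfFiniteType f] {C : Scheme.{u}} {i : C ⟶ X} (h : IsRationalCurve f i) {c c' : CH₀ X}
    (hc : IsBeauvilleVoisinClass f c) (hc' : IsBeauvilleVoisinClass f c') : c = c' := by
  have := h.isCurve.nonempty
  have := h.isCurve.isClosedImmersion
  have : LocallyOfFiniteType (i ≫ f) := inferInstance
  have : JacobsonSpace C := LocallyOfFiniteType.jacobsonSpace (i ≫ f)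
  obtain ⟨y, -, hy⟩ := nonempty_inter_closedPoints (X := C) (Z := Set.univ) Set.univ_nonempty
    isOpen_univ.isLocallyClosed
  have hy' : IsClosed {i y} := by
    have := i.isClosedEmbedding.isClosedMap _ (mem_closedPoints_iff.1 hy)
    simpa using this
  rw [← hc.eq_of_rational C i h ⟨i y, hy'⟩ ⟨y, rfl⟩,
    ← hc'.eq_of_rational C i h ⟨i y, hy'⟩ ⟨y, rfl⟩]

/-! ### The class `κ_C` and constant cycle curves -/

/-- The closed point of a separated scheme `Y` over (the spectrum of a field) `S` given by
a section of `Y ⟶ S`. -/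
def closedPointOfSection {Y S : Scheme.{u}} [Subsingleton S] [Nonempty S] (p : Y ⟶ S)
    [IsSeparated p] (s : S ⟶ Y) (hs : s ≫ p = 𝟙 S) : closedPoints Y :=
  ⟨s (Classical.arbitrary S), by
    have := isClosedImmersion_of_comp_eq_id _ _ hs
    have h := s.isClosedEmbedding.isClosed_range
    rw [Set.range_eq_singleton (y := s (Classical.arbitrary S))
      (fun x => congrArg s (Subsingleton.elim _ _))] at h
    exact mem_closedPoints_iff.2 h⟩

/-- For an integral scheme `W` over `k`, the morphism `Spec k(η_W) ⟶ Spec k`. -/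
def genericPointStr {W : Scheme.{u}} [IsIntegral W] (p : W ⟶ Spec (.of k)) :
    Spec W.functionField ⟶ Spec (.of k) :=
  genericPointInclusion W ≫ p

/-- The generic fibre `X_{k(η_W)} = X ×_k k(η_W)` of the projection `X × W → W`, for an integral
curve `ι : W ⟶ X` in the `k`-scheme `f : X ⟶ Spec k`. -/
def genericFibre (f : X ⟶ Spec (.of k)) {W : Scheme.{u}} [IsIntegral W] (ι : W ⟶ X) :
    Scheme.{u} :=
  pullback f (genericPointStr (ι ≫ f))

/-- The structure morphism `X ×_k k(η_W) ⟶ Spec k(η_W)`. -/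
def genericFibreStr (f : X ⟶ Spec (.of k)) {W : Scheme.{u}} [IsIntegral W] (ι : W ⟶ X) :
    genericFibre f ι ⟶ Spec W.functionField :=
  pullback.snd f (genericPointStr (ι ≫ f))

instance (f : X ⟶ Spec (.of k)) [IsSeparated f] {W : Scheme.{u}} [IsIntegral W] (ι : W ⟶ X) :
    IsSeparated (genericFibreStr f ι) :=
  inferInstanceAs (IsSeparated (pullback.snd f (genericPointStr (ι ≫ f))))

instance (W : Scheme.{u}) [IsIntegral W] : Subsingleton (Spec W.functionField) :=
  inferInstanceAs (Subsingleton (PrimeSpectrum W.functionField))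

/-- The restriction of the graph `Δ_W ⊂ X × W` of `ι : W ⟶ X` to the generic fibre `X ×_k k(η_W)`:
the generic point `η_W` of `W`, viewed as a `k(η_W)`-rational point of `X ×_k k(η_W)`. -/
def graphPoint (f : X ⟶ Spec (.of k)) [IsSeparated f] {W : Scheme.{u}} [IsIntegral W]
    (ι : W ⟶ X) : closedPoints (genericFibre f ι) :=
  closedPointOfSection (genericFibreStr f ι)
    (pullback.lift (genericPointInclusion W ≫ ι) (𝟙 _) (by simp [genericPointStr]))
    (pullback.lift_snd _ _ _)

/-- The restriction of `{x₀} × W ⊂ X × W` to the generic fibre `X ×_k k(η_W)`, for a closed point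
`x₀` of `X`: the `k(η_W)`-rational point of `X ×_k k(η_W)` given by base change of the `k`-rational
point `x₀`. -/
def constantPoint [IsAlgClosed k] (f : X ⟶ Spec (.of k)) [IsSeparated f] [LocallyOfFiniteType f]
    {W : Scheme.{u}} [IsIntegral W] (ι : W ⟶ X) (x₀ : closedPoints X) :
    closedPoints (genericFibre f ι) :=
  closedPointOfSection (genericFibreStr f ι)
    (pullback.lift (genericPointStr (ι ≫ f) ≫ pointOfClosedPoint f x₀.1 (mem_closedPoints_iff.1 x₀.2)) (𝟙 _)
      (by rw [Category.assoc, pointOfClosedPoint_comp, Category.comp_id, Category.id_comp]))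
    (pullback.lift_snd _ _ _)

/-- The class `κ_W ∈ CH²(X ×_k k(η_W))` of the restriction of `Δ_W − {x₀} × W` to the generic
fibre of `X × W → W`, for an integral curve `ι : W ⟶ X`. -/
def kappa [IsAlgClosed k] (f : X ⟶ Spec (.of k)) [IsSeparated f] [LocallyOfFiniteType f]
    {W : Scheme.{u}} [IsIntegral W] (ι : W ⟶ X) (x₀ : closedPoints X) : CH₀ (genericFibre f ι) :=
  CH₀.cls (graphPoint f ι) - CH₀.cls (constantPoint f ι x₀)

/-- A curve `i : C ⟶ X` is a constant cycle curve if `κ_W` is torsion for every integral component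
`W` of `C`. Here `x₀` is the chosen closed point with `[x₀] = c_X`. -/
def IsConstantCycleCurve [IsAlgClosed k] (f : X ⟶ Spec (.of k)) [IsSeparated f]
    [LocallyOfFiniteType f] {C : Scheme.{u}} (i : C ⟶ X) (x₀ : closedPoints X) : Prop :=
  ∀ (W : Scheme.{u}) (j : W ⟶ C) (hj : IsIntegralComponent j),
    haveI := hj.isIntegral
    IsOfFinAddOrder (kappa f (j ≫ i) x₀)

/-- The order of a constant cycle curve: the maximum of the orders of the classes `κ_W` of its
integral components `W`. -/
def cccOrder [IsAlgClosed k] (f : X ⟶ Spec (.of k)) [IsSeparated f]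
    [LocallyOfFiniteType f] {C : Scheme.{u}} (i : C ⟶ X) (x₀ : closedPoints X) : ℕ :=
  sSup {n | ∃ (W : Scheme.{u}) (j : W ⟶ C) (hj : IsIntegralComponent j),
    haveI := hj.isIntegral
    n = addOrderOf (kappa f (j ≫ i) x₀)}

end

end K3CCC

/-!
Let `W` be an integral component of a rational curve and `K = k(η_W)` its function field. The
normalization of `W` gives a finite morphism `g : ℙ¹ ⟶ X` with image `W`, and `η_W` lifts to a
`K`-point `η` of `ℙ¹_K`. If the affine coordinate `t` is defined at `η`, and at a closed point `t₁`
of `ℙ¹`, then `(t - t(η)) / (t - t(t₁))` is a rational function on `ℙ¹_K` with divisor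
`[η] - [(t₁)_K]`. Pushing it forward along `ℙ¹_K ⟶ X_K` shows that the graph point of `W` is
rationally equivalent to the base change of the closed point `x₁ = g(t₁)` of `W`. Rational
equivalence is stable under the base change `K / k`, so `[x₁] = [x₀]` in `CH₀(X)` gives
`κ_W = [(x₁)_K] - [(x₀)_K] = 0`.
-/

namespace K3CCC

section Algebra

open TensorProduct IsLocalRing

lemma exists_algHom_ne_zero {k A : Type*} [Field k] [IsAlgClosed k] [CommRing A] [IsDomain A]
    [Algebra k A] [Algebra.FiniteType k A] {c : A} (hc : c ≠ 0) :
    ∃ χ : A →ₐ[k] k, χ c ≠ 0 := by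
  have : IsJacobsonRing A := isJacobsonRing_of_finiteType (A := k)
  have hj : (⊥ : Ideal A).jacobson = ⊥ :=
    IsJacobsonRing.out ‹_› (Ideal.IsPrime.isRadical Ideal.isPrime_bot)
  have hc' : c ∉ (⊥ : Ideal A).jacobson := by rwa [hj, Ideal.mem_bot]
  rw [Ideal.jacobson, Ideal.mem_sInf] at hc'
  push Not at hc'
  obtain ⟨m, ⟨-, hm⟩, hcm⟩ := hc'
  let _ : Field (A ⧸ m) := Ideal.Quotient.field m
  have : Module.Finite k (A ⧸ m) := finite_of_finite_type_of_isJacobsonRing k (A ⧸ m)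
  have hbij : Function.Bijective (algebraMap k (A ⧸ m)) :=
    IsAlgClosed.ringHom_bijective_of_isIntegral _ (algebraMap_isIntegral_iff.2 inferInstance)
  let e : k ≃ₐ[k] A ⧸ m := AlgEquiv.ofBijective (Algebra.ofId k (A ⧸ m)) hbij
  refine ⟨(e.symm : (A ⧸ m) →ₐ[k] k).comp (Ideal.Quotient.mkₐ k m), ?_⟩
  simpa [Ideal.Quotient.eq_zero_iff_mem] using hcm

/- Two nonzero elements of `A ⊗ B` have nonzero coordinates in `A` with respect to a basis of `B`;
specialising `A` at a rational point where both coordinates survive reduces to the domain `B`. -/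
lemma isDomain_tensorProduct_of_finiteType {k : Type*} (A B : Type*) [Field k] [IsAlgClosed k]
    [CommRing A] [IsDomain A] [Algebra k A] [Algebra.FiniteType k A] [CommRing B] [IsDomain B]
    [Algebra k B] : IsDomain (A ⊗[k] B) := by
  let b := Module.Basis.ofVectorSpace k B
  let β := Algebra.TensorProduct.basis A b
  have exists_coord_ne_zero {z : A ⊗[k] B} (hz : z ≠ 0) : ∃ i, β.repr z i ≠ 0 :=
    Finsupp.ne_iff.1 ((map_ne_zero_iff β.repr β.repr.injective).2 hz)
  have : NoZeroDivisors (A ⊗[k] B) := by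
    refine ⟨fun {z w} hzw => ?_⟩
    by_contra! h
    obtain ⟨i, hi⟩ := exists_coord_ne_zero h.1
    obtain ⟨j, hj⟩ := exists_coord_ne_zero h.2
    obtain ⟨χ, hχ⟩ := exists_algHom_ne_zero (k := k) (mul_ne_zero hi hj)
    let F : A ⊗[k] B →ₐ[k] B :=
      Algebra.TensorProduct.lift ((Algebra.ofId k B).comp χ) (AlgHom.id k B) fun _ _ => .all _ _
    have hF (z : A ⊗[k] B) (i) : b.repr (F z) i = χ (β.repr z i) := by
      induction z with
      | zero => simp
      | add x y hx hy => simp [hx, hy]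
      | tmul a y =>
        simp [F, β, Algebra.ofId_apply, Algebra.TensorProduct.basis_repr_tmul,
          Algebra.algebraMap_eq_smul_one, mul_comm]
    rw [map_mul] at hχ
    have hFz : F z ≠ 0 := fun h0 => left_ne_zero_of_mul hχ (by rw [← hF, h0]; simp)
    have hFw : F w ≠ 0 := fun h0 => right_ne_zero_of_mul hχ (by rw [← hF, h0]; simp)
    exact mul_ne_zero hFz hFw (by rw [← map_mul, hzw, map_zero])
  exact NoZeroDivisors.to_isDomain _

lemma isDomain_tensorProduct {k : Type*} (A B : Type*) [Field k] [IsAlgClosed k]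
    [CommRing A] [IsDomain A] [Algebra k A] [CommRing B] [IsDomain B]
    [Algebra k B] : IsDomain (A ⊗[k] B) := by
  have : NoZeroDivisors (A ⊗[k] B) := by
    refine ⟨fun {z w} hzw => ?_⟩
    obtain ⟨C, hC, hz⟩ := exists_fg_and_mem_baseChange z
    obtain ⟨D, hD, hw⟩ := exists_fg_and_mem_baseChange w
    have : Algebra.FiniteType k ↥(C ⊔ D) := (C ⊔ D).fg_iff_finiteType.1 (hC.sup hD)
    let F : A ⊗[k] ↥(C ⊔ D) →ₐ[k] A ⊗[k] B :=
      Algebra.TensorProduct.map (AlgHom.id k A) (C ⊔ D).val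
    have hF : Function.Injective F :=
      Module.Flat.lTensor_preserves_injective_linearMap (C ⊔ D).val.toLinearMap
        Subtype.val_injective
    have exists_lift {G : Subalgebra k B} (hG : G ≤ C ⊔ D) {x : A ⊗[k] B}
        (hx : x ∈ G.baseChange A) : ∃ y, F y = x := by
      obtain ⟨y, rfl⟩ := hx
      refine ⟨Algebra.TensorProduct.map (AlgHom.id k A) (Subalgebra.inclusion hG) y, ?_⟩
      induction y with
      | zero => simp
      | add x y hx hy => simp only [map_add, hx, hy]
      | tmul a y => simp [F]
    obtain ⟨z, rfl⟩ := exists_lift le_sup_left hz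
    obtain ⟨w, rfl⟩ := exists_lift le_sup_right hw
    have := isDomain_tensorProduct_of_finiteType (k := k) ↥(C ⊔ D) A
    have : IsDomain (A ⊗[k] ↥(C ⊔ D)) :=
      (Algebra.TensorProduct.comm k A ↥(C ⊔ D)).toMulEquiv.isDomain _
    rw [← map_mul, map_eq_zero_iff F hF] at hzw
    exact (mul_eq_zero.1 hzw).imp (by rintro rfl; simp) (by rintro rfl; simp)
  exact NoZeroDivisors.to_isDomain _

lemma ker_eq_span_of_surjective_eval₂ {K R : Type*} [CommRing K] [CommRing R] {φ : K →+* R} {t : R}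
    (ht : Function.Surjective (Polynomial.eval₂RingHom φ t)) {χ : R →+* K}
    (hχ : χ.comp φ = .id K) : RingHom.ker χ = Ideal.span {t - φ (χ t)} := by
  have hχφ (a : K) : χ (φ a) = a := congr($hχ a)
  apply le_antisymm
  · intro r hr
    obtain ⟨P, rfl⟩ := ht r
    have hP : P.eval (χ t) = 0 := by
      rw [RingHom.mem_ker, Polynomial.coe_eval₂RingHom, Polynomial.hom_eval₂, hχ] at hr
      exact hr
    have h := Polynomial.sub_dvd_eval_sub t (φ (χ t)) (P.map φ)
    rw [Polynomial.eval_map_apply, hP, map_zero, sub_zero, Polynomial.eval_map] at h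
    exact Ideal.mem_span_singleton.2 h
  · rw [Ideal.span_singleton_le_iff_mem, RingHom.mem_ker, map_sub, hχφ, sub_self]

lemma ringKrullDim_le_one_of_surjective_eval₂ {K R : Type*} [CommRing K] [CommRing R]
    (hK : IsField K) {φ : K →+* R} {t : R}
    (ht : Function.Surjective (Polynomial.eval₂RingHom φ t)) : ringKrullDim R ≤ 1 := by
  let _ := hK.toField
  refine (ringKrullDim_le_of_surjective _ ht).trans ?_
  simp [Polynomial.ringKrullDim_of_isNoetherianRing]

/- The quotient of `B` by the extension of `ker c` is again a cocone, because it receives a map from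
`K = A / ker c`; the universal property then embeds the kernel of `b` into that extension. -/
lemma ker_eq_map_ker_of_isPushout {A B K L : CommRingCat.{u}} {c : A ⟶ K} {i : A ⟶ B} {j : K ⟶ L}
    {b : B ⟶ L} (h : IsPushout c i j b) (hc : Function.Surjective c) :
    RingHom.ker b.hom = (RingHom.ker c.hom).map i.hom := by
  let I := (RingHom.ker c.hom).map i.hom
  let m : B ⟶ .of (B ⧸ I) := CommRingCat.ofHom (Ideal.Quotient.mk I)
  let d : K ⟶ .of (B ⧸ I) := CommRingCat.ofHom <|
    RingHom.liftOfSurjective c.hom hc ⟨(i ≫ m).hom, fun a ha =>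
      Ideal.Quotient.eq_zero_iff_mem.2 (Ideal.mem_map_of_mem i.hom ha)⟩
  have hd : c ≫ d = i ≫ m := CommRingCat.hom_ext (RingHom.liftOfSurjective_comp _ hc _)
  apply le_antisymm
  · intro x (hx : b x = 0)
    have hm : m x = h.desc d m hd (b x) := congr($((h.inr_desc d m hd).symm) x)
    exact Ideal.Quotient.eq_zero_iff_mem.1 (hm.trans (by rw [hx, map_zero]))
  · rw [Ideal.map_le_iff_le_comap]
    intro a (ha : c a = 0)
    have hw : b (i a) = j (c a) := congr($(h.w.symm) a)
    exact RingHom.mem_ker.2 (hw.trans (by rw [ha, map_zero]))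

lemma surjective_eval₂_of_isPushout {R A L B : CommRingCat.{u}} {f : R ⟶ A} {g : R ⟶ L}
    {a : A ⟶ B} {l : L ⟶ B} (h : IsPushout f g a l) {t : A}
    (ht : Function.Surjective (Polynomial.eval₂RingHom f.hom t)) :
    Function.Surjective (Polynomial.eval₂RingHom l.hom (a t)) := by
  algebraize [f.hom, g.hom, a.hom, l.hom, (f ≫ a).hom]
  have : IsScalarTower R A B := .of_algebraMap_eq' rfl
  have : IsScalarTower R L B := .of_algebraMap_eq' congr($(h.w).hom)
  have : Algebra.IsPushout R L A B := CommRingCat.isPushout_iff_isPushout.1 h.flip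
  intro z
  obtain ⟨z, rfl⟩ := (Algebra.IsPushout.equiv R L A B).surjective z
  induction z with
  | zero => exact ⟨0, by simp⟩
  | add x y hx hy =>
    obtain ⟨P, hP⟩ := hx
    obtain ⟨Q, hQ⟩ := hy
    exact ⟨P + Q, by rw [map_add, hP, hQ, map_add]⟩
  | tmul x y =>
    obtain ⟨P, rfl⟩ := ht y
    have hP : P.eval₂ (l.hom.comp g.hom) (a t) = a (P.eval₂ f.hom t) := by
      rw [Polynomial.hom_eval₂]
      exact congr(P.eval₂ $(h.w.symm).hom (a t))
    refine ⟨.C x * P.map g.hom, ?_⟩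
    rw [map_mul, Polynomial.coe_eval₂RingHom, Polynomial.eval₂_C, Polynomial.eval₂_map, hP,
      Algebra.IsPushout.equiv_tmul]
    rfl

lemma ringKrullDim_le_of_isIntegral (R S : Type*) [CommRing R] [CommRing S] [Algebra R S]
    [Algebra.IsIntegral R S] : ringKrullDim S ≤ ringKrullDim R :=
  Order.krullDim_le_of_strictMono (PrimeSpectrum.comap (algebraMap R S)) fun P Q h =>
    Ideal.IsIntegral.comap_lt_comap (I := P.asIdeal) (J := Q.asIdeal) h

lemma ringKrullDim_le_of_isIntegral_of_faithfulSMul (R S : Type*) [CommRing R] [CommRing S]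
    [Algebra R S] [Algebra.IsIntegral R S] [FaithfulSMul R S] :
    ringKrullDim R ≤ ringKrullDim S := by
  refine iSup_le fun l => ?_
  have hker : RingHom.ker (algebraMap R S) = ⊥ :=
    (RingHom.injective_iff_ker_eq_bot _).1 (FaithfulSMul.algebraMap_injective R S)
  obtain ⟨P, -, hP, hPl⟩ := Ideal.exists_ideal_over_prime_of_isIntegral (S := S) l.head.asIdeal ⊥
    (by rw [← RingHom.ker_eq_comap_bot, hker]; exact bot_le)
  have : P.LiesOver l.head.asIdeal := ⟨hPl.symm⟩
  obtain ⟨L, hL, -⟩ := Ideal.exists_ltSeries_of_hasGoingUp (S := S) l P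
  rw [← hL]
  exact le_iSup (fun p : LTSeries (PrimeSpectrum S) => ((p.length : ℕ∞) : WithBot ℕ∞)) L

/- Noether normalisation: both algebras are integral over polynomial rings in the same number of
variables, injectively so for `A`. -/
lemma ringKrullDim_tensorProduct_le (k K A : Type*) [Field k] [Field K] [Algebra k K]
    [CommRing A] [Nontrivial A] [Algebra k A] [Algebra.FiniteType k A] :
    ringKrullDim (K ⊗[k] A) ≤ ringKrullDim A := by
  obtain ⟨n, g, hg, hfin⟩ := exists_finite_inj_algHom_of_fg k A
  let G := Algebra.TensorProduct.map (AlgHom.id k K) g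
  have hG : G.toRingHom.IsIntegral :=
    (RingHom.Finite.tensorProductMap (f := AlgHom.id k K) (AlgHom.Finite.id k K) hfin).to_isIntegral
  algebraize [g.toRingHom, G.toRingHom]
  have : FaithfulSMul (MvPolynomial (Fin n) k) A :=
    (faithfulSMul_iff_algebraMap_injective _ _).2 hg
  have : Algebra.IsIntegral (MvPolynomial (Fin n) k) A := ⟨hfin.to_isIntegral⟩
  calc ringKrullDim (K ⊗[k] A) ≤ ringKrullDim (K ⊗[k] MvPolynomial (Fin n) k) :=
        ringKrullDim_le_of_isIntegral _ _
    _ = ringKrullDim (MvPolynomial (Fin n) K) :=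
        ringKrullDim_eq_of_ringEquiv (MvPolynomial.algebraTensorAlgEquiv k K).toRingEquiv
    _ = ringKrullDim (MvPolynomial (Fin n) k) := by simp
    _ ≤ ringKrullDim A := ringKrullDim_le_of_isIntegral_of_faithfulSMul _ _

lemma length_quotient_maximalIdeal (A : Type*) [CommRing A] [IsLocalRing A] :
    Module.length A (A ⧸ maximalIdeal A) = 1 :=
  Module.length_eq_one_iff.2 (isSimpleModule_iff_quot_maximal.2
    ⟨_, inferInstance, ⟨LinearEquiv.refl _ _⟩⟩)

lemma ord_algebraMap_of_map_maximalIdeal {A B : Type*} [CommRing A] [CommRing B] [IsLocalRing A]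
    [IsLocalRing B] [Algebra A B] [IsLocalHom (algebraMap A B)] [Module.Flat A B]
    (h : (maximalIdeal A).map (algebraMap A B) = maximalIdeal B) (a : A) :
    Ring.ord B (algebraMap A B a) = Ring.ord A a := by
  have hlen := IsLocalRing.length_baseChange A B (A ⧸ Ideal.span {a})
  rw [h, length_quotient_maximalIdeal, mul_one] at hlen
  rw [Ring.ord, Ring.ord, ← hlen,
    ← (Algebra.TensorProduct.quotIdealMapEquivTensorQuot B
      (Ideal.span {a})).toLinearEquiv.length_eq,
    Ideal.map_span, Set.image_singleton]

lemma ord_eq_one_of_maximalIdeal_eq_span {A : Type*} [CommRing A] [IsLocalRing A] {a : A}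
    (h : maximalIdeal A = Ideal.span {a}) : Ring.ord A a = 1 := by
  rw [Ring.ord, ← h, length_quotient_maximalIdeal]

end Algebra

section Dimension

variable {T : Scheme.{u}}

lemma topologicalKrullDim_eq_krullDim (T : Scheme.{u}) :
    topologicalKrullDim T = Order.krullDim T :=
  Order.krullDim_eq_of_orderIso irreducibleSetEquivPoints

lemma isClosed_singleton_iff_isMin {t : T} : IsClosed {t} ↔ IsMin t := by
  rw [← closure_subset_iff_isClosed, Set.subset_singleton_iff]
  simp only [← specializes_iff_mem_closure]
  exact ⟨fun h y (hy : t ⤳ y) => (h y hy) ▸ le_refl t,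
    fun h y hy => (Specializes.antisymm (h (b := y) hy) hy).eq⟩

lemma topologicalKrullDim_eq_ringKrullDim {U : T.Opens} (hU : IsAffineOpen U) :
    topologicalKrullDim U = ringKrullDim Γ(T, U) := by
  rw [← PrimeSpectrum.topologicalKrullDim_eq_ringKrullDim]
  exact IsHomeomorph.topologicalKrullDim_eq _ hU.isoSpec.hom.homeomorph.isHomeomorph

lemma coheight_le_ringKrullDim {U : T.Opens} (hU : IsAffineOpen U) {t : T} (ht : t ∈ U) :
    (Order.coheight t : WithBot ℕ∞) ≤ ringKrullDim Γ(T, U) := by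
  let t' : U.toScheme := ⟨t, ht⟩
  have h : Order.coheight t = Order.coheight t' := coheight_eq_of_isOpenImmersion (x := t') U.ι
  rw [← topologicalKrullDim_eq_ringKrullDim hU, h, topologicalKrullDim_eq_krullDim U.toScheme]
  exact Order.coheight_le_krullDim t'

variable [IsIntegral T]

lemma le_genericPoint (t : T) : t ≤ genericPoint T := genericPoint_specializes t

lemma isMax_iff_eq_genericPoint {t : T} : IsMax t ↔ t = genericPoint T :=
  ⟨fun h => (Specializes.antisymm (h (le_genericPoint t)) (le_genericPoint t)).eq,
    fun h => h ▸ fun y _ => le_genericPoint y⟩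

lemma one_le_topologicalKrullDim_iff :
    1 ≤ topologicalKrullDim T ↔ ∃ t : T, t ≠ genericPoint T := by
  rw [topologicalKrullDim_eq_krullDim, Order.one_le_krullDim_iff]
  constructor
  · rintro ⟨x, y, hxy⟩
    exact ⟨x, fun h => (isMax_iff_eq_genericPoint.2 h).not_lt hxy⟩
  · rintro ⟨t, ht⟩
    exact ⟨t, _, lt_of_le_not_ge (le_genericPoint t)
      fun h => ht (isMax_iff_eq_genericPoint.1 fun y _ => (le_genericPoint y).trans h)⟩

lemma topologicalKrullDim_eq_one (h : ∀ t : T, Order.coheight t ≤ 1)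
    (h' : ∃ t : T, t ≠ genericPoint T) : topologicalKrullDim T = 1 := by
  refine le_antisymm ?_ (one_le_topologicalKrullDim_iff.2 h')
  rw [topologicalKrullDim_eq_krullDim, Order.krullDim_eq_iSup_coheight]
  exact iSup_le fun t => by exact_mod_cast h t

lemma isClosed_singleton_iff_ne_genericPoint (hT : topologicalKrullDim T = 1) {t : T} :
    IsClosed {t} ↔ t ≠ genericPoint T := by
  rw [isClosed_singleton_iff_isMin]
  constructor
  · rintro h rfl
    obtain ⟨x, hx⟩ := one_le_topologicalKrullDim_iff.1 hT.ge
    exact hx (isMax_iff_eq_genericPoint.1 fun y _ => (le_genericPoint y).trans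
      (h (le_genericPoint x)))
  · intro h
    rw [topologicalKrullDim_eq_krullDim] at hT
    exact (Order.krullDim_le_one_iff.1 hT.le t).resolve_right
      fun hmax => h (isMax_iff_eq_genericPoint.1 hmax)

lemma coheight_eq_one_of_isClosed (hT : topologicalKrullDim T = 1) {t : T} (ht : IsClosed {t}) :
    Order.coheight t = 1 := by
  apply le_antisymm
  · rw [topologicalKrullDim_eq_krullDim] at hT
    exact_mod_cast (Order.coheight_le_krullDim t).trans hT.le
  · rw [Order.one_le_iff_ne_zero, Order.coheight_ne_zero, isMax_iff_eq_genericPoint]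
    exact (isClosed_singleton_iff_ne_genericPoint hT).1 ht

end Dimension

section FieldPoint

variable {X Y S Z : Scheme.{u}}

lemma le_preimage_top (f : X ⟶ Y) (U : X.Opens) : U ≤ f ⁻¹ᵁ ⊤ := le_top

lemma id_appLE {U : X.Opens} (e : U ≤ 𝟙 X ⁻¹ᵁ U) : (𝟙 X : X ⟶ X).appLE U U e = 𝟙 _ := by
  rw [Scheme.Hom.appLE, Scheme.Hom.id_app]
  exact X.presheaf.map_id _

lemma appLE_comp_appLE_eq_id {f : X ⟶ Y} {g : Y ⟶ X} (hfg : f ≫ g = 𝟙 X) {U : X.Opens}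
    {V : Y.Opens} (e₁ : V ≤ g ⁻¹ᵁ U) (e₂ : U ≤ f ⁻¹ᵁ V) :
    g.appLE U V e₁ ≫ f.appLE V U e₂ = 𝟙 _ := by
  rw [Scheme.Hom.appLE_comp_appLE, ← id_appLE (U := U) le_rfl]
  congr 1

lemma germ_appLE (f : X ⟶ Y) {U : Y.Opens} {V : X.Opens} (e : V ≤ f ⁻¹ᵁ U) {x : X} (hx : x ∈ V)
    (a : Γ(Y, U)) : X.presheaf.germ V x hx (f.appLE U V e a) =
      f.stalkMap x (Y.presheaf.germ U (f x) (e hx) a) := by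
  rw [Scheme.Hom.appLE, CommRingCat.comp_apply]
  exact (TopCat.Presheaf.germ_res_apply X.presheaf (homOfLE e) x hx (f.app U a)).trans
    (Scheme.Hom.germ_stalkMap_apply f U x (e hx) a).symm

lemma map_germ_comap_germ {V : Z.Opens} (hV : IsAffineOpen V) {z : Z} (hz : z ∈ V)
    (J : Ideal (Z.presheaf.stalk z)) :
    (J.comap (Z.presheaf.germ V z hz).hom).map (Z.presheaf.germ V z hz).hom = J := by
  have := hV.isLocalization_stalk ⟨z, hz⟩
  algebraize [(Z.presheaf.germ V z hz).hom]
  exact IsLocalization.map_under (hV.primeIdealOf ⟨z, hz⟩).asIdeal.primeCompl _ J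

lemma top_le_preimage_of_mem [Subsingleton S] (σ : S ⟶ Z) {V : Z.Opens} {x : S}
    (hx : σ x ∈ V) : ⊤ ≤ σ ⁻¹ᵁ V := fun y _ => by
  rw [Subsingleton.elim y x]; exact hx

variable [IsIntegral S] [Subsingleton S]

lemma mem_basicOpen_iff_appLE_ne_zero (σ : S ⟶ Z) {V : Z.Opens} (x : S) (e : ⊤ ≤ σ ⁻¹ᵁ V)
    (r : Γ(Z, V)) : σ x ∈ Z.basicOpen r ↔ σ.appLE V ⊤ e r ≠ 0 := by
  have hF := isField_of_isIntegral_of_subsingleton S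
  calc σ x ∈ Z.basicOpen r ↔ x ∈ S.basicOpen (σ.appLE V ⊤ e r) := by
        rw [Scheme.basicOpen_appLE]; exact (and_iff_right trivial).symm
    _ ↔ IsUnit (S.presheaf.germ ⊤ x trivial (σ.appLE V ⊤ e r)) :=
        Scheme.mem_basicOpen S _ x (Set.mem_univ x)
    _ ↔ σ.appLE V ⊤ e r ≠ 0 := by
        refine ⟨fun h h0 => ?_, fun h => ?_⟩
        · rw [h0, map_zero] at h
          exact not_isUnit_zero h
        · exact (isUnit_iff_exists_inv.2 (hF.mul_inv_cancel h)).map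
            (S.presheaf.germ ⊤ x trivial).hom

lemma maximalIdeal_stalk_eq_map_ker (σ : S ⟶ Z) {V : Z.Opens} (hV : IsAffineOpen V) {x : S}
    {z : Z} (hx : σ x = z) (hz : z ∈ V) (e : ⊤ ≤ σ ⁻¹ᵁ V) :
    IsLocalRing.maximalIdeal (Z.presheaf.stalk z) =
      (RingHom.ker (σ.appLE V ⊤ e).hom).map (Z.presheaf.germ V z hz).hom := by
  subst hx
  rw [← map_germ_comap_germ hV hz (IsLocalRing.maximalIdeal _)]
  congr 1
  ext r
  rw [Ideal.mem_comap, IsLocalRing.mem_maximalIdeal, mem_nonunits_iff, RingHom.mem_ker,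
    not_iff_comm]
  exact (mem_basicOpen_iff_appLE_ne_zero σ x e r).symm.trans (Scheme.mem_basicOpen Z r _ hz)

end FieldPoint

lemma ringKrullDim_le_of_isPushout {R A L B : CommRingCat.{u}} {f : R ⟶ A} {g : R ⟶ L} {a : A ⟶ B}
    {l : L ⟶ B} (h : IsPushout f g a l) (hf : f.hom.FiniteType) (hR : IsField R) (hL : IsField L)
    [Nontrivial A] : ringKrullDim B ≤ ringKrullDim A := by
  let _ : Field R := hR.toField
  let _ : Field L := hL.toField
  algebraize [f.hom, g.hom]
  let e := h.flip.isoIsPushout _ _ (CommRingCat.isPushout_tensorProduct R L A)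
  rw [ringKrullDim_eq_of_ringEquiv e.commRingCatIsoToRingEquiv]
  exact ringKrullDim_tensorProduct_le R L A

lemma map_genericPoint {T Z : Scheme.{u}} [IsIntegral T] [IsIntegral Z] (π : Z ⟶ T)
    [IsDominant π] : π (genericPoint Z) = genericPoint T := by
  apply ((genericPoint_spec T).eq _).symm
  have := (genericPoint_spec Z).image π.continuous
  rwa [Set.image_univ, π.denseRange.closure_range] at this

section BaseChange

variable {k : Type u} [Field k] {S T Z : Scheme.{u}} {p : T ⟶ Spec (.of k)}
  {s : S ⟶ Spec (.of k)} {π : Z ⟶ T} {q : Z ⟶ S}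

lemma geometricallyIntegral_of_isAlgClosed [IsAlgClosed k] [IsIntegral S] [IsAffine S]
    (s : S ⟶ Spec (.of k)) : GeometricallyIntegral s := by
  have := MorphismProperty.IsStableUnderBaseChange.respectsIso (P := @GeometricallyIntegral)
  rw [← MorphismProperty.cancel_left_of_respectsIso @GeometricallyIntegral S.isoSpec.inv s]
  obtain ⟨φ, hφ⟩ := Spec.map_surjective (S.isoSpec.inv ≫ s)
  rw [← hφ]
  refine ⟨geometrically_iff_of_commRing.2 fun L _ _ Y _ _ h => ?_⟩
  algebraize [φ.hom]
  have h' := isPullback_SpecMap_of_isPushout _ _ _ _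
    (CommRingCat.isPushout_tensorProduct k Γ(S, ⊤) L)
  have := isDomain_tensorProduct (k := k) Γ(S, ⊤) L
  exact .of_isIso (h.isoIsPullback _ _ h').inv

lemma isIntegral_of_isPullback [IsAlgClosed k] [IsIntegral S] [IsAffine S] [IsIntegral T]
    [IsLocallyNoetherian T] (H : IsPullback π q p s) : IsIntegral Z :=
  have := geometricallyIntegral_of_isAlgClosed s
  .of_isIso H.isoPullback.inv

lemma flat_of_isPullback (H : IsPullback π q p s) : Flat π :=
  MorphismProperty.of_isPullback H.flip (inferInstance : Flat s)

lemma surjective_of_isPullback [Nonempty S] (H : IsPullback π q p s) : Surjective π :=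
  MorphismProperty.of_isPullback H.flip (inferInstance : Surjective s)

lemma isAffineHom_of_isPullback [IsAffine S] (H : IsPullback π q p s) : IsAffineHom π :=
  MorphismProperty.of_isPullback H.flip (inferInstance : IsAffineHom s)

lemma isPushout_of_isPullback [IsAffine S] (H : IsPullback π q p s) {U : T.Opens}
    (hU : IsAffineOpen U) :
    IsPushout (p.appLE ⊤ U (le_preimage_top p U)) (s.appLE ⊤ ⊤ (le_preimage_top s ⊤))
      (π.appLE U (π ⁻¹ᵁ U) le_rfl) (q.appLE ⊤ (π ⁻¹ᵁ U) (le_preimage_top q _)) :=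
  (isIso_pushoutSection_iff H le_top le_top (by simp)).1
    (isIso_pushoutSection_of_isAffineOpen H le_top le_top (by simp) (isAffineOpen_top _)
      (isAffineOpen_top _) hU)

section Field

variable [IsIntegral S] [Subsingleton S] [LocallyOfFiniteType p]

lemma isLocallyNoetherian_of_isPullback (H : IsPullback π q p s) : IsLocallyNoetherian Z :=
  have : LocallyOfFiniteType q := MorphismProperty.of_isPullback H ‹_›
  LocallyOfFiniteType.isLocallyNoetherian q

lemma ringKrullDim_le_of_isPullback (H : IsPullback π q p s) {U : T.Opens} [Nonempty U]
    (hU : IsAffineOpen U) :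
    ringKrullDim Γ(Z, π ⁻¹ᵁ U) ≤ ringKrullDim Γ(T, U) :=
  have : Nontrivial Γ(T, U) := Scheme.component_nontrivial T U
  ringKrullDim_le_of_isPushout (isPushout_of_isPullback H hU)
    (LocallyOfFiniteType.finiteType_appLE p (isAffineOpen_top _) hU le_top)
    (isField_of_isIntegral_of_subsingleton _) (isField_of_isIntegral_of_subsingleton _)

lemma coheight_le_one_of_isPullback (H : IsPullback π q p s) (hT : topologicalKrullDim T ≤ 1)
    (z : Z) : Order.coheight z ≤ 1 := by
  obtain ⟨_, ⟨U, hU, rfl⟩, hzU, -⟩ :=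
    T.isBasis_affineOpens.exists_subset_of_mem_open (Set.mem_univ (π z)) isOpen_univ
  have := isAffineHom_of_isPullback H
  have : Nonempty U := ⟨⟨_, hzU⟩⟩
  have hz : (Order.coheight z : WithBot ℕ∞) ≤ 1 :=
    calc (Order.coheight z : WithBot ℕ∞) ≤ ringKrullDim Γ(Z, π ⁻¹ᵁ U) :=
          coheight_le_ringKrullDim (hU.preimage π) hzU
      _ ≤ ringKrullDim Γ(T, U) := ringKrullDim_le_of_isPullback H hU
      _ = topologicalKrullDim U := (topologicalKrullDim_eq_ringKrullDim hU).symm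
      _ ≤ topologicalKrullDim T := topologicalKrullDim_subspace_le T U
      _ ≤ 1 := hT
  exact_mod_cast hz

lemma topologicalKrullDim_of_isPullback [IsIntegral T] [IsIntegral Z] (H : IsPullback π q p s)
    (hT : topologicalKrullDim T = 1) : topologicalKrullDim Z = 1 := by
  refine topologicalKrullDim_eq_one (coheight_le_one_of_isPullback H hT.le) ?_
  obtain ⟨t, ht⟩ := one_le_topologicalKrullDim_iff.1 hT.ge
  have := surjective_of_isPullback H
  obtain ⟨z, rfl⟩ := π.surjective t
  exact ⟨z, fun h => ht (by rw [h, map_genericPoint])⟩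

end Field

end BaseChange

section RationalPoint

lemma isPullback_lift {B S T Z : Scheme.{u}} {p : T ⟶ B} {s : S ⟶ B} {π : Z ⟶ T} {q : Z ⟶ S}
    (H : IsPullback π q p s) (c : B ⟶ T) (hc : c ≫ p = 𝟙 B) :
    IsPullback (H.lift (s ≫ c) (𝟙 S) (by simp [hc])) s π c := by
  refine IsPullback.of_right (h₁₂ := q) (h₂₂ := p) (v₁₃ := s) ?_ (by simp) H.flip
  simpa [hc] using IsPullback.of_id_fst (f := s)

/-- The closed point `t` of a scheme `p : T ⟶ Spec k` locally of finite type over an algebraically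
closed field `k`, as a `k`-valued point. -/
noncomputable abbrev rationalPoint {k : Type u} [Field k] [IsAlgClosed k] {T : Scheme.{u}}
    (p : T ⟶ Spec (.of k)) [LocallyOfFiniteType p] (t : closedPoints T) : Spec (.of k) ⟶ T :=
  pointOfClosedPoint p t.1 (mem_closedPoints_iff.1 t.2)

lemma rationalPoint_apply {k : Type u} [Field k] [IsAlgClosed k] {T : Scheme.{u}}
    (p : T ⟶ Spec (.of k)) [LocallyOfFiniteType p] (t : closedPoints T) (y : Spec (.of k)) :
    rationalPoint p t y = t.1 :=
  pointOfClosedPoint_apply ..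

variable {k : Type u} [Field k] {S T Z : Scheme.{u}} {p : T ⟶ Spec (.of k)}
  {s : S ⟶ Spec (.of k)} {π : Z ⟶ T} {q : Z ⟶ S} (H : IsPullback π q p s)
  [IsAlgClosed k] [LocallyOfFiniteType p]

/-- The section of the base change `Z = T ×ₖ S ⟶ S` that is constantly equal to the closed, hence
`k`-rational, point `t` of `T`. -/
noncomputable def constantSection (t : closedPoints T) : S ⟶ Z :=
  H.lift (s ≫ rationalPoint p t) (𝟙 S) (by simp)

lemma constantSection_comp_snd (t : closedPoints T) :
    constantSection H t ≫ q = 𝟙 S := H.lift_snd ..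

lemma constantSection_comp_fst (t : closedPoints T) : constantSection H t ≫ π =
    s ≫ rationalPoint p t := H.lift_fst ..

lemma apply_constantSection (t : closedPoints T) (y : S) : π (constantSection H t y) = t.1 := by
  rw [← Scheme.Hom.comp_apply, constantSection_comp_fst, Scheme.Hom.comp_apply,
    rationalPoint_apply]

lemma isPullback_constantSection (t : closedPoints T) : IsPullback (constantSection H t) s π
    (rationalPoint p t) :=
  isPullback_lift H _ (pointOfClosedPoint_comp ..)

lemma exists_constantSection_eq {t : closedPoints T} {z : Z} (hz : π z = t.1) :
    ∃ y, constantSection H t y = z := by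
  obtain ⟨y, hy, -⟩ := Scheme.exists_preimage_of_isPullback (isPullback_constantSection H t)
    z (IsLocalRing.closedPoint k) (hz.trans (rationalPoint_apply ..).symm)
  exact ⟨y, hy⟩

lemma ker_constantSection_appLE [IsAffine S] (t : closedPoints T) {U : T.Opens}
    (hU : IsAffineOpen U) (hc : ⊤ ≤ rationalPoint p t ⁻¹ᵁ U)
    (hσ : ⊤ ≤ constantSection H t ⁻¹ᵁ π ⁻¹ᵁ U) :
    RingHom.ker ((constantSection H t).appLE (π ⁻¹ᵁ U) ⊤ hσ).hom =
      (RingHom.ker ((rationalPoint p t).appLE U ⊤ hc).hom).map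
        (π.appLE U (π ⁻¹ᵁ U) le_rfl).hom := by
  have := isAffineHom_of_isPullback H
  have hpush := (isIso_pushoutSection_iff (isPullback_constantSection H t).flip le_rfl hc
    (UY := ⊤) (top_le_iff.1 (le_inf (le_preimage_top _ _) hσ)).symm).1
    (isIso_pushoutSection_of_isAffineOpen _ _ _ _ hU (hU.preimage π) (isAffineOpen_top _))
  refine ker_eq_map_ker_of_isPushout hpush fun a => ?_
  have hid := appLE_comp_appLE_eq_id (pointOfClosedPoint_comp p t.1 _)
    (le_preimage_top p U) hc
  exact ⟨_, congr($hid a)⟩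

/- Both maximal ideals come from the kernels of the sections through the two points over affine
charts, and these kernels correspond to each other under base change. -/
lemma map_maximalIdeal_stalkMap [IsIntegral S] [Subsingleton S] (H : IsPullback π q p s) {z : Z}
    (hz : IsClosed {π z}) :
    (IsLocalRing.maximalIdeal (T.presheaf.stalk (π z))).map (π.stalkMap z).hom =
      IsLocalRing.maximalIdeal (Z.presheaf.stalk z) := by
  let t : closedPoints T := ⟨π z, mem_closedPoints_iff.2 hz⟩
  obtain ⟨y, hy⟩ := exists_constantSection_eq H (t := t) rfl
  obtain ⟨_, ⟨U, hU, rfl⟩, hzU, -⟩ :=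
    T.isBasis_affineOpens.exists_subset_of_mem_open (Set.mem_univ (π z)) isOpen_univ
  have := isAffineHom_of_isPullback H
  have hct : rationalPoint p t (s y) = π z := rationalPoint_apply ..
  have hσ : ⊤ ≤ constantSection H t ⁻¹ᵁ π ⁻¹ᵁ U := top_le_preimage_of_mem _ (by rw [hy]; exact hzU)
  have hc : ⊤ ≤ rationalPoint p t ⁻¹ᵁ U :=
    top_le_preimage_of_mem _ (by rw [hct]; exact hzU)
  rw [maximalIdeal_stalk_eq_map_ker _ (hU.preimage π) hy hzU hσ,
    maximalIdeal_stalk_eq_map_ker _ hU hct hzU hc, ker_constantSection_appLE H t hU hc hσ,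
    Ideal.map_map, Ideal.map_map]
  congr 1
  ext a
  exact (germ_appLE π le_rfl hzU a).symm

end RationalPoint

lemma ordFrac_map_eq {A B : Type u} [CommRing A] [IsDomain A] [IsNoetherianRing A]
    [Ring.KrullDimLE 1 A] [CommRing B] [IsDomain B] [IsNoetherianRing B] [Ring.KrullDimLE 1 B]
    {K L : Type u} [Field K] [Algebra A K] [IsFractionRing A K] [Field L] [Algebra B L]
    [IsFractionRing B L] {φ : A →+* B} {Φ : K →+* L}
    (hΦ : ∀ a, Φ (algebraMap A K a) = algebraMap B L (φ a))
    (hφ : ∀ a, Ring.ord B (φ a) = Ring.ord A a) (x : K) :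
    Ring.ordFrac B (Φ x) = Ring.ordFrac A x := by
  have key (a : A) (ha : algebraMap A K a ≠ 0) :
      Ring.ordFrac B (algebraMap B L (φ a)) = Ring.ordFrac A (algebraMap A K a) := by
    have ha' : algebraMap B L (φ a) ≠ 0 := by rwa [← hΦ, Ne, map_eq_zero]
    have ha₀ : a ≠ 0 := by rintro rfl; simp at ha
    have hφa : φ a ≠ 0 := by intro h; simp [h] at ha'
    rw [Ring.ordFrac_eq_ord _ ha₀, Ring.ordFrac_eq_ord _ hφa,
      Ring.ordMonoidWithZeroHom_eq_ord (mem_nonZeroDivisors_of_ne_zero ha₀),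
      Ring.ordMonoidWithZeroHom_eq_ord (mem_nonZeroDivisors_of_ne_zero hφa), hφ]
  by_cases hx : x = 0
  · simp [hx]
  obtain ⟨a, b, -, rfl⟩ := IsFractionRing.div_surjective (A := A) x
  obtain ⟨ha, hb⟩ := div_ne_zero_iff.1 hx
  rw [map_div₀, map_div₀, map_div₀, hΦ, hΦ, key a ha, key b hb]

section FunctionField

variable {Z T : Scheme.{u}} [IsIntegral Z] [IsIntegral T] (π : Z ⟶ T) [IsDominant π]

/-- The embedding of function fields induced by a dominant morphism of integral schemes. -/
noncomputable def functionFieldMap : T.functionField →+* Z.functionField :=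
  (T.presheaf.stalkSpecializes (specializes_of_eq (map_genericPoint π)) ≫
    π.stalkMap (genericPoint Z)).hom

lemma functionFieldMap_algebraMap (z : Z) (a : T.presheaf.stalk (π z)) :
    functionFieldMap π (algebraMap _ T.functionField a) =
      algebraMap _ Z.functionField (π.stalkMap z a) := by
  have h := congr($(Scheme.Hom.stalkSpecializes_stalkMap π _ _ (genericPoint_specializes z)) a)
  refine Eq.trans ?_ h
  rw [← T.presheaf.stalkSpecializes_comp (specializes_of_eq (map_genericPoint π))
    (genericPoint_specializes (π z))]
  rfl

variable [IsLocallyNoetherian Z]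

lemma ord_functionFieldMap_of_map_maximalIdeal [IsLocallyNoetherian T] [Flat π] {z : Z}
    (hz : Order.coheight z = 1) (hπz : Order.coheight (π z) = 1)
    (hm : (IsLocalRing.maximalIdeal (T.presheaf.stalk (π z))).map (π.stalkMap z).hom =
      IsLocalRing.maximalIdeal (Z.presheaf.stalk z)) (φ : T.functionField) :
    Scheme.ord (functionFieldMap π φ) z = Scheme.ord φ (π z) := by
  have : Ring.KrullDimLE 1 (Z.presheaf.stalk z) := krullDimLE_of_coheight_le hz.le
  have : Ring.KrullDimLE 1 (T.presheaf.stalk (π z)) := krullDimLE_of_coheight_le hπz.le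
  algebraize [(π.stalkMap z).hom]
  have : Module.Flat (T.presheaf.stalk (π z)) (Z.presheaf.stalk z) := Flat.stalkMap π z
  have : IsLocalHom (algebraMap (T.presheaf.stalk (π z)) (Z.presheaf.stalk z)) :=
    inferInstanceAs (IsLocalHom (π.stalkMap z).hom)
  have hord : Scheme.ordHom z hz (functionFieldMap π φ) = Scheme.ordHom (π z) hπz φ :=
    ordFrac_map_eq (functionFieldMap_algebraMap π z) (ord_algebraMap_of_map_maximalIdeal hm) φ
  rw [Scheme.ord_eq_ordHom_of_coheight_eq_one hz, Scheme.ord_eq_ordHom_of_coheight_eq_one hπz,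
    hord]

lemma ord_functionFieldMap_of_eq_genericPoint {z : Z} (hπz : π z = genericPoint T)
    (φ : T.functionField) : Scheme.ord (functionFieldMap π φ) z = 0 := by
  by_cases hφ : φ = 0
  · simp [hφ]
  obtain ⟨U, -, a, _, rfl, ha⟩ := exists_isUnit_germ_eq T φ hφ
  have hzU : π z ∈ U := by
    rw [hπz]
    exact (genericPoint_spec T).mem_open_set_iff U.isOpen |>.2 (by simpa using ‹Nonempty U›)
  have : Nonempty (π ⁻¹ᵁ U) := ⟨⟨z, hzU⟩⟩
  have hmap : functionFieldMap π (T.germToFunctionField U a) =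
      Z.germToFunctionField (π ⁻¹ᵁ U) (π.app U a) := by
    rw [← Scheme.algebraMap_germ_eq_germToFunctionField (x := z) Z hzU,
      ← Scheme.algebraMap_germ_eq_germToFunctionField (x := π z) T hzU,
      functionFieldMap_algebraMap, Scheme.Hom.germ_stalkMap_apply]
  rw [hmap, Scheme.ord_of_isUnit (ha.map (π.app U).hom) hzU]

end FunctionField

lemma residueDegree_eq_one {S Z Y : Scheme.{u}} {σ : S ⟶ Z} {g : Z ⟶ Y} {r : Y ⟶ S}
    (h : σ ≫ g ≫ r = 𝟙 S) (y : S) : g.residueDegree (σ y) = 1 := by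
  have hbij : Function.Bijective ((σ ≫ g ≫ r).residueFieldMap y) := by
    have (f : S ⟶ S) (hf : f = 𝟙 S) : Function.Bijective (f.residueFieldMap y) := by
      subst hf
      rw [Scheme.residueFieldMap_id]
      exact Function.bijective_id
    exact this _ h
  simp only [Scheme.residueFieldMap_comp] at hbij
  algebraize [(g.residueFieldMap (σ y)).hom]
  refine (finrank_eq_one_iff_of_nonzero' (1 : Z.residueField (σ y)) one_ne_zero).2 fun w => ?_
  obtain ⟨v, hv⟩ := hbij.2 (σ.residueFieldMap y w)
  refine ⟨r.residueFieldMap (g (σ y)) v, ?_⟩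
  rw [Algebra.smul_def, mul_one]
  exact (σ.residueFieldMap y).hom.injective hv

lemma pushforward_single {Y Z : Scheme.{u}} (g : Z ⟶ Y) [IsFinite g] {z : closedPoints Z}
    (hz : g.residueDegree z.1 = 1) (n : ℤ) :
    ZeroCycle.pushforward g (Finsupp.single z n) = Finsupp.single (mapClosedPoint g z) n := by
  rw [ZeroCycle.pushforward, Finsupp.liftAddHom_apply_single, hz]
  simp

section BaseChangePoint

variable {k : Type u} [Field k] [IsAlgClosed k] {S T Z : Scheme.{u}} [Subsingleton S]
  {p : T ⟶ Spec (.of k)} [LocallyOfFiniteType p] {s : S ⟶ Spec (.of k)} {π : Z ⟶ T} {q : Z ⟶ S}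

lemma eq_of_apply_eq (H : IsPullback π q p s) {t : closedPoints T} {z z' : Z} (hz : π z = t.1)
    (hz' : π z' = t.1) : z = z' := by
  obtain ⟨y, rfl⟩ := exists_constantSection_eq H hz
  obtain ⟨y', rfl⟩ := exists_constantSection_eq H hz'
  rw [Subsingleton.elim y y']

variable [Nonempty S] (H : IsPullback π q p s)

/-- The unique point of the base change `Z = T ×ₖ S` over a closed, hence `k`-rational, point of
`T`. -/
noncomputable def baseChangePoint (t : closedPoints T) : closedPoints Z :=
  ⟨constantSection H t (Classical.arbitrary S), by
    have : {constantSection H t (Classical.arbitrary S)} = π ⁻¹' {t.1} := by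
      ext z
      exact ⟨fun h => h ▸ apply_constantSection H t _,
        fun h => eq_of_apply_eq H h (apply_constantSection H t _)⟩
    rw [mem_closedPoints_iff, this]
    exact (mem_closedPoints_iff.1 t.2).preimage π.continuous⟩

lemma apply_baseChangePoint (t : closedPoints T) : π (baseChangePoint H t).1 = t.1 :=
  apply_constantSection H t _

lemma baseChangePoint_eq_iff {t : closedPoints T} {z : closedPoints Z} :
    baseChangePoint H t = z ↔ π z.1 = t.1 :=
  ⟨fun h => h ▸ apply_baseChangePoint H t,
    fun h => Subtype.ext (eq_of_apply_eq H (apply_baseChangePoint H t) h)⟩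

lemma baseChangePoint_injective : Function.Injective (baseChangePoint H) := fun t t' h =>
  Subtype.ext (by rw [← apply_baseChangePoint H, h, apply_baseChangePoint])

lemma mapClosedPoint_baseChangePoint {X Y : Scheme.{u}} {f : X ⟶ Spec (.of k)}
    [LocallyOfFiniteType f] {a : Y ⟶ X} {r : Y ⟶ S} (HX : IsPullback a r f s) {g : T ⟶ X}
    [IsFinite g] {g' : Z ⟶ Y} [IsFinite g'] (hgg : g' ≫ a = π ≫ g) (t : closedPoints T) :
    mapClosedPoint g' (baseChangePoint H t) = baseChangePoint HX (mapClosedPoint g t) := by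
  refine ((baseChangePoint_eq_iff HX).2 ?_).symm
  have := congr($hgg (baseChangePoint H t).1)
  rwa [Scheme.Hom.comp_apply, Scheme.Hom.comp_apply, apply_baseChangePoint] at this

end BaseChangePoint

section BaseChangeCycle

variable {k : Type u} [Field k] [IsAlgClosed k] {S T X Y Z : Scheme.{u}}
  [Subsingleton S] {p : T ⟶ Spec (.of k)} [LocallyOfFiniteType p] {f : X ⟶ Spec (.of k)}
  [LocallyOfFiniteType f] {s : S ⟶ Spec (.of k)} {π : Z ⟶ T} {q : Z ⟶ S} {a : Y ⟶ X} {r : Y ⟶ S}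

lemma pushforward_mapDomain_baseChangePoint [Nonempty S] (H : IsPullback π q p s)
    (HX : IsPullback a r f s) (g : T ⟶ X) [IsFinite g] (g' : Z ⟶ Y) [IsFinite g']
    (hg : g ≫ f = p) (hg' : g' ≫ r = q) (hgg : g' ≫ a = π ≫ g) (D : ZeroCycle T) :
    ZeroCycle.pushforward g' (D.mapDomain (baseChangePoint H)) =
      (ZeroCycle.pushforward g D).mapDomain (baseChangePoint HX) := by
  induction D using Finsupp.induction_linear with
  | zero => simp
  | add D E hD hE => simp only [Finsupp.mapDomain_add, map_add, hD, hE]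
  | single t n =>
    have hdeg : g'.residueDegree (baseChangePoint H t).1 = 1 :=
      residueDegree_eq_one (by rw [hg', constantSection_comp_snd]) _
    have hdeg' : g.residueDegree t.1 = 1 := by
      have := residueDegree_eq_one (σ := rationalPoint p t) (g := g) (r := f)
        (by rw [hg, pointOfClosedPoint_comp]) (Classical.arbitrary _)
      rwa [rationalPoint_apply] at this
    rw [Finsupp.mapDomain_single, pushforward_single g' hdeg, pushforward_single g hdeg',
      Finsupp.mapDomain_single, mapClosedPoint_baseChangePoint H HX hgg]

variable [IsIntegral S]

lemma isDivisorOf_mapDomain_baseChangePoint [IsIntegral T] [IsLocallyNoetherian T] [IsIntegral Z]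
    [IsLocallyNoetherian Z] [IsDominant π] (H : IsPullback π q p s)
    (hT : topologicalKrullDim T = 1) {φ : T.functionField} {D : ZeroCycle T}
    (hD : IsDivisorOf D φ) :
    IsDivisorOf (D.mapDomain (baseChangePoint H)) (functionFieldMap π φ) := by
  have hZ := topologicalKrullDim_of_isPullback H hT
  have := flat_of_isPullback H
  intro z
  have hz := mem_closedPoints_iff.1 z.2
  by_cases hz' : ∃ t, baseChangePoint H t = z
  · obtain ⟨t, rfl⟩ := hz'
    have ht : IsClosed {π (baseChangePoint H t).1} := by
      rw [apply_baseChangePoint]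
      exact mem_closedPoints_iff.1 t.2
    rw [Finsupp.mapDomain_apply (baseChangePoint_injective H), hD,
      ord_functionFieldMap_of_map_maximalIdeal π (coheight_eq_one_of_isClosed hZ hz)
        (coheight_eq_one_of_isClosed hT ht) (map_maximalIdeal_stalkMap H ht),
      apply_baseChangePoint]
  · rw [Finsupp.mapDomain_of_notMem_range _ _ hz', ord_functionFieldMap_of_eq_genericPoint]
    contrapose! hz'
    exact ⟨⟨π z.1, mem_closedPoints_iff.2 ((isClosed_singleton_iff_ne_genericPoint hT).2 hz')⟩,
      (baseChangePoint_eq_iff H).2 rfl⟩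

lemma mapDomain_baseChangePoint_mem_ratEquivZero (HX : IsPullback a r f s) {c : ZeroCycle X}
    (hc : c ∈ ratEquivZero X) : c.mapDomain (baseChangePoint HX) ∈ ratEquivZero Y := by
  suffices ratEquivZero X ≤
      (ratEquivZero Y).comap (Finsupp.mapDomain.addMonoidHom (baseChangePoint HX)) from this hc
  rw [ratEquivZero, AddSubgroup.closure_le]
  rintro _ ⟨T, _, _, g, _, φ, D, hT, hφ, hD, rfl⟩
  have H : IsPullback (pullback.fst g a) (pullback.snd g a ≫ r) (g ≫ f) s :=
    ((IsPullback.of_hasPullback g a).flip.paste_horiz HX.flip).flip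
  have := isIntegral_of_isPullback H
  have := isLocallyNoetherian_of_isPullback H
  have := surjective_of_isPullback H
  refine AddSubgroup.subset_closure ⟨pullback g a, inferInstance, inferInstance, pullback.snd g a,
    inferInstance, functionFieldMap (pullback.fst g a) φ, D.mapDomain (baseChangePoint H),
    topologicalKrullDim_of_isPullback H hT, (map_ne_zero _).2 hφ,
    isDivisorOf_mapDomain_baseChangePoint H hT hD, ?_⟩
  exact (pushforward_mapDomain_baseChangePoint H HX g (pullback.snd g a) rfl rfl
    pullback.condition.symm D).symm

/-- Base change of zero-cycles along an extension `S ⟶ Spec k` of the algebraically closed ground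
field. -/
noncomputable def CH₀.baseChange (HX : IsPullback a r f s) : CH₀ X →+ CH₀ Y :=
  QuotientAddGroup.map _ _ (Finsupp.mapDomain.addMonoidHom (baseChangePoint HX))
    fun _ => mapDomain_baseChangePoint_mem_ratEquivZero HX

lemma CH₀.baseChange_cls (HX : IsPullback a r f s) (x : closedPoints X) :
    CH₀.baseChange HX (CH₀.cls x) = CH₀.cls (baseChangePoint HX x) :=
  (QuotientAddGroup.map_mk ..).trans (congrArg _ Finsupp.mapDomain_single)

end BaseChangeCycle

section AffineLine

variable {S Z : Scheme.{u}} {q : Z ⟶ S} {U : Z.Opens} {t : Γ(Z, U)} {σ : S ⟶ Z}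

/-- `t` is a coordinate on an affine open subset `U` of `q : Z ⟶ S`: it generates the functions on
`U` as an algebra over the global functions on `S`. -/
structure IsAffineCoordinate (q : Z ⟶ S) {U : Z.Opens} (t : Γ(Z, U)) : Prop where
  isAffineOpen : IsAffineOpen U
  surjective_eval₂ :
    Function.Surjective (Polynomial.eval₂RingHom (q.appLE ⊤ U (le_preimage_top q U)).hom t)

/-- The function `t - t(σ)` cutting out the section `σ` of `q : Z ⟶ S` in the domain of the
coordinate `t`. -/
noncomputable def sectionEquation (q : Z ⟶ S) (t : Γ(Z, U)) (σ : S ⟶ Z) (e : ⊤ ≤ σ ⁻¹ᵁ U) :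
    Γ(Z, U) :=
  t - q.appLE ⊤ U (le_preimage_top q U) (σ.appLE U ⊤ e t)

lemma ker_section_appLE (ht : IsAffineCoordinate q t) (hσ : σ ≫ q = 𝟙 S)
    (e : ⊤ ≤ σ ⁻¹ᵁ U) :
    RingHom.ker (σ.appLE U ⊤ e).hom = Ideal.span {sectionEquation q t σ e} :=
  ker_eq_span_of_surjective_eval₂ ht.surjective_eval₂ congr($(appLE_comp_appLE_eq_id hσ _ e).hom)

variable [IsIntegral S] [Subsingleton S]

lemma maximalIdeal_stalk_eq_span_germ_sectionEquation (ht : IsAffineCoordinate q t)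
    (hσ : σ ≫ q = 𝟙 S) (e : ⊤ ≤ σ ⁻¹ᵁ U) {y : S} {z : Z} (hy : σ y = z) (hz : z ∈ U) :
    IsLocalRing.maximalIdeal (Z.presheaf.stalk z) =
      Ideal.span {Z.presheaf.germ U z hz (sectionEquation q t σ e)} := by
  rw [maximalIdeal_stalk_eq_map_ker σ ht.isAffineOpen hy hz e, ker_section_appLE ht hσ e,
    Ideal.map_span, Set.image_singleton]

lemma isUnit_germ_sectionEquation (ht : IsAffineCoordinate q t)
    (hσ : σ ≫ q = 𝟙 S) (e : ⊤ ≤ σ ⁻¹ᵁ U) {y : S} {z : Z} (hy : σ y ≠ z) (hz : z ∈ U) :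
    IsUnit (Z.presheaf.germ U z hz (sectionEquation q t σ e)) := by
  have hU := ht.isAffineOpen
  have hσy : σ y ∈ U := e trivial
  have mem_primeIdeal_iff {x : Z} (hx : x ∈ U) (r : Γ(Z, U)) :
      r ∈ (hU.primeIdealOf ⟨x, hx⟩).asIdeal ↔ x ∉ Z.basicOpen r := by
    rw [hU.primeIdealOf_eq_map_closedPoint, Scheme.mem_basicOpen Z r x hx]
    rfl
  have hmax : (RingHom.ker (σ.appLE U ⊤ e).hom).IsMaximal := by
    let _ := (isField_of_isIntegral_of_subsingleton S).toField
    exact RingHom.ker_isMaximal_of_surjective (K := Γ(S, ⊤)) _ fun a =>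
      ⟨q.appLE ⊤ U (le_preimage_top q U) a, congr($(appLE_comp_appLE_eq_id hσ _ e) a)⟩
  have hker : RingHom.ker (σ.appLE U ⊤ e).hom = (hU.primeIdealOf ⟨σ y, hσy⟩).asIdeal := by
    ext r
    rw [mem_primeIdeal_iff, mem_basicOpen_iff_appLE_ne_zero σ y e, not_not]
    rfl
  rw [← Scheme.mem_basicOpen]
  by_contra hz'
  have hle : RingHom.ker (σ.appLE U ⊤ e).hom ≤ (hU.primeIdealOf ⟨z, hz⟩).asIdeal := by
    rwa [ker_section_appLE ht hσ e, Ideal.span_singleton_le_iff_mem, mem_primeIdeal_iff]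
  have heq := hmax.eq_of_le (hU.primeIdealOf ⟨z, hz⟩).2.ne_top hle
  exact hy <| calc σ y = hU.fromSpec (hU.primeIdealOf ⟨σ y, hσy⟩) :=
        (hU.fromSpec_primeIdealOf ⟨σ y, hσy⟩).symm
    _ = hU.fromSpec (hU.primeIdealOf ⟨z, hz⟩) := by rw [PrimeSpectrum.ext (hker.symm.trans heq)]
    _ = z := hU.fromSpec_primeIdealOf ⟨z, hz⟩

end AffineLine

section Order

variable {Z : Scheme.{u}} [IsIntegral Z] [IsLocallyNoetherian Z]

lemma ord_algebraMap_of_isUnit {z : Z} {a : Z.presheaf.stalk z} (ha : IsUnit a) :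
    Scheme.ord (algebraMap _ Z.functionField a) z = 0 := by
  by_cases hz : Order.coheight z = 1
  · have : Ring.KrullDimLE 1 (Z.presheaf.stalk z) := krullDimLE_of_coheight_le hz.le
    rw [Scheme.ord_eq_iff hz ((ha.map _).ne_zero)]
    exact Ring.ordFrac_of_isUnit ha
  · exact Scheme.ord_eq_zero_of_coheight_neq_one hz _

lemma ord_algebraMap_of_maximalIdeal_eq_span {z : Z} (hz : Order.coheight z = 1)
    {a : Z.presheaf.stalk z}
    (ha : IsLocalRing.maximalIdeal (Z.presheaf.stalk z) = Ideal.span {a}) :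
    Scheme.ord (algebraMap _ Z.functionField a) z = 1 := by
  have : Ring.KrullDimLE 1 (Z.presheaf.stalk z) := krullDimLE_of_coheight_le hz.le
  have ha₀ : a ≠ 0 := by
    rintro rfl
    rw [Ideal.span_singleton_zero] at ha
    have hdim := ringKrullDim_eq_zero_of_isField (IsLocalRing.isField_iff_maximalIdeal_eq.2 ha)
    rw [ringKrullDim_stalk_eq_coheight, hz] at hdim
    norm_num at hdim
  have hK : algebraMap _ Z.functionField a ≠ 0 :=
    (map_ne_zero_iff _ (IsFractionRing.injective _ _)).2 ha₀
  rw [Scheme.ord_eq_iff hz hK]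
  exact (Ring.ordFrac_eq_ord _ ha₀).trans (Ring.ordMonoidWithZeroHom_eq_coe _
    (mem_nonZeroDivisors_of_ne_zero ha₀) (n := 1) (ord_eq_one_of_maximalIdeal_eq_span ha))

lemma ord_div {z : Z} {φ ψ : Z.functionField} (hφ : φ ≠ 0) (hψ : ψ ≠ 0) :
    Scheme.ord (φ / ψ) z = Scheme.ord φ z - Scheme.ord ψ z := by
  rw [eq_sub_iff_add_eq, ← Scheme.ord_mul (div_ne_zero hφ hψ) hψ, div_mul_cancel₀ _ hψ]

end Order

/-- The coordinates `t` on `U` and `w = t⁻¹` on `V` exhibit `q : Z ⟶ S` as a projective line over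
`S`. -/
structure IsProjLine {S Z : Scheme.{u}} (q : Z ⟶ S) {U V : Z.Opens} (t : Γ(Z, U)) (w : Γ(Z, V)) :
    Prop where
  left : IsAffineCoordinate q t
  right : IsAffineCoordinate q w
  mem_or_mem : ∀ z : Z, z ∈ U ∨ z ∈ V
  germ_mul_germ : ∀ (z : Z) (hU : z ∈ U) (hV : z ∈ V),
    Z.presheaf.germ U z hU t * Z.presheaf.germ V z hV w = 1
  basicOpen_le : Z.basicOpen w ≤ U

section AffineCoordinateBaseChange

variable {k : Type u} [Field k] {S T Z : Scheme.{u}} [IsAffine S] {p : T ⟶ Spec (.of k)}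
  {s : S ⟶ Spec (.of k)} {π : Z ⟶ T} {q : Z ⟶ S} {U V : T.Opens} {t : Γ(T, U)} {w : Γ(T, V)}

lemma IsAffineCoordinate.of_isPullback (ht : IsAffineCoordinate p t) (H : IsPullback π q p s) :
    IsAffineCoordinate q (π.appLE U (π ⁻¹ᵁ U) le_rfl t) where
  isAffineOpen := have := isAffineHom_of_isPullback H; ht.isAffineOpen.preimage π
  surjective_eval₂ :=
    surjective_eval₂_of_isPushout (isPushout_of_isPullback H ht.isAffineOpen) ht.surjective_eval₂

lemma IsProjLine.of_isPullback (h : IsProjLine p t w) (H : IsPullback π q p s) :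
    IsProjLine q (π.appLE U (π ⁻¹ᵁ U) le_rfl t) (π.appLE V (π ⁻¹ᵁ V) le_rfl w) where
  left := h.left.of_isPullback H
  right := h.right.of_isPullback H
  mem_or_mem z := h.mem_or_mem (π z)
  germ_mul_germ z hU hV := by
    have h := congrArg (π.stalkMap z) (h.germ_mul_germ (π z) hU hV)
    rwa [map_mul, map_one, ← germ_appLE π le_rfl hU, ← germ_appLE π le_rfl hV] at h
  basicOpen_le := by
    rw [← Scheme.Hom.app_eq_appLE, ← Scheme.Hom.preimage_basicOpen]
    exact π.preimage_mono h.basicOpen_le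

end AffineCoordinateBaseChange

section Divisor

variable {S Z : Scheme.{u}} {q : Z ⟶ S} {U V : Z.Opens} {t : Γ(Z, U)} {w : Γ(Z, V)}
  {σ τ : S ⟶ Z}

/- Away from `U`, the section equation `t - c` is the unit `1 - c w` divided by `w`. -/
lemma IsProjLine.ord_sectionEquation_of_notMem [IsIntegral Z] [IsLocallyNoetherian Z] [Nonempty U]
    [Nonempty V] (h : IsProjLine q t w) (e : ⊤ ≤ σ ⁻¹ᵁ U) {z : Z} (hz : z ∉ U) :
    Scheme.ord (Z.germToFunctionField U (sectionEquation q t σ e)) z =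
      - Scheme.ord (Z.germToFunctionField V w) z := by
  have hzV : z ∈ V := (h.mem_or_mem z).resolve_left hz
  let c := q.appLE ⊤ V (le_preimage_top q V) (σ.appLE U ⊤ e t)
  have hunit : IsUnit (Z.presheaf.germ V z hzV (1 - c * w)) := by
    have hw : Z.presheaf.germ V z hzV w ∈ nonunits _ := fun hw =>
      hz (h.basicOpen_le ((Scheme.mem_basicOpen Z w z hzV).2 hw))
    rw [map_sub, map_one, map_mul]
    exact IsLocalRing.isUnit_one_sub_self_of_mem_nonunits _
      (Ideal.mul_mem_left (IsLocalRing.maximalIdeal _) _ hw)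
  have hmul : Z.germToFunctionField U (sectionEquation q t σ e) * Z.germToFunctionField V w =
      Z.germToFunctionField V (1 - c * w) := by
    have htw : Z.germToFunctionField U t * Z.germToFunctionField V w = 1 := h.germ_mul_germ _ _ _
    have hc : Z.germToFunctionField U (q.appLE ⊤ U (le_preimage_top q U) (σ.appLE U ⊤ e t)) =
        Z.germToFunctionField V c := by
      rw [Scheme.germToFunctionField, germ_appLE, germ_appLE]
    rw [sectionEquation, map_sub, sub_mul, htw, hc, map_sub, map_one, map_mul]
  have hne : Z.germToFunctionField V (1 - c * w) ≠ 0 := by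
    rw [← Scheme.algebraMap_germ_eq_germToFunctionField Z hzV]
    exact (hunit.map _).ne_zero
  rw [← hmul] at hne
  rw [eq_neg_iff_add_eq_zero,
    ← Scheme.ord_mul (left_ne_zero_of_mul hne) (right_ne_zero_of_mul hne), hmul,
    ← Scheme.algebraMap_germ_eq_germToFunctionField Z hzV]
  exact ord_algebraMap_of_isUnit hunit

variable [IsIntegral S] [Subsingleton S]

lemma IsAffineCoordinate.coheight_le_one (ht : IsAffineCoordinate q t) {z : Z} (hz : z ∈ U) :
    Order.coheight z ≤ 1 := by
  have h : (Order.coheight z : WithBot ℕ∞) ≤ 1 :=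
    (coheight_le_ringKrullDim ht.isAffineOpen hz).trans <| ringKrullDim_le_one_of_surjective_eval₂
      (isField_of_isIntegral_of_subsingleton S) ht.surjective_eval₂
  exact_mod_cast h

variable [IsIntegral Z]

lemma IsProjLine.topologicalKrullDim_eq_one (h : IsProjLine q t w)
    (hZ : ∃ z : Z, z ≠ genericPoint Z) : topologicalKrullDim Z = 1 :=
  K3CCC.topologicalKrullDim_eq_one
    (fun z => (h.mem_or_mem z).elim h.left.coheight_le_one h.right.coheight_le_one) hZ

lemma IsAffineCoordinate.sectionEquation_ne_zero [Nonempty U] (ht : IsAffineCoordinate q t)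
    (hσ : σ ≫ q = 𝟙 S) (e : ⊤ ≤ σ ⁻¹ᵁ U) {y : S} (hy : σ y ≠ genericPoint Z) :
    Z.germToFunctionField U (sectionEquation q t σ e) ≠ 0 :=
  (isUnit_germ_sectionEquation ht hσ e hy _).ne_zero

variable [IsLocallyNoetherian Z]

open Classical in
lemma IsAffineCoordinate.ord_sectionEquation [Nonempty U] (ht : IsAffineCoordinate q t)
    (hσ : σ ≫ q = 𝟙 S) (e : ⊤ ≤ σ ⁻¹ᵁ U) (y : S) {z : Z} (hz : z ∈ U)
    (hz₁ : Order.coheight z = 1) :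
    Scheme.ord (Z.germToFunctionField U (sectionEquation q t σ e)) z =
      if σ y = z then 1 else 0 := by
  rw [← Scheme.algebraMap_germ_eq_germToFunctionField Z hz]
  split_ifs with hy
  · exact ord_algebraMap_of_maximalIdeal_eq_span hz₁
      (maximalIdeal_stalk_eq_span_germ_sectionEquation ht hσ e hy hz)
  · exact ord_algebraMap_of_isUnit (isUnit_germ_sectionEquation ht hσ e hy hz)

lemma IsProjLine.isDivisorOf_div_sectionEquation [Nonempty U] (h : IsProjLine q t w)
    (hZ : topologicalKrullDim Z = 1) (hσ : σ ≫ q = 𝟙 S) (hτ : τ ≫ q = 𝟙 S) (eσ : ⊤ ≤ σ ⁻¹ᵁ U)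
    (eτ : ⊤ ≤ τ ⁻¹ᵁ U) {y : S} {z z' : closedPoints Z} (hz : σ y = z.1) (hz' : τ y = z'.1) :
    IsDivisorOf (Finsupp.single z 1 - Finsupp.single z' 1)
      (Z.germToFunctionField U (sectionEquation q t σ eσ) /
        Z.germToFunctionField U (sectionEquation q t τ eτ)) := by
  classical
  have generic (x : closedPoints Z) : x.1 ≠ genericPoint Z :=
    (isClosed_singleton_iff_ne_genericPoint hZ).1 (mem_closedPoints_iff.1 x.2)
  intro x
  have hx : Order.coheight x.1 = 1 := coheight_eq_one_of_isClosed hZ (mem_closedPoints_iff.1 x.2)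
  rw [ord_div (h.left.sectionEquation_ne_zero hσ eσ (hz.trans_ne (generic z)))
    (h.left.sectionEquation_ne_zero hτ eτ (hz'.trans_ne (generic z'))), Finsupp.sub_apply,
    Finsupp.single_apply, Finsupp.single_apply]
  by_cases hxU : x.1 ∈ U
  · simp only [h.left.ord_sectionEquation hσ eσ y hxU hx,
      h.left.ord_sectionEquation hτ eτ y hxU hx, hz, hz', Subtype.ext_iff]
  · have hne {z : closedPoints Z} (hzU : z.1 ∈ U) : z ≠ x := fun h => hxU (h ▸ hzU)
    have : Nonempty V := ⟨⟨x, (h.mem_or_mem x.1).resolve_left hxU⟩⟩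
    rw [h.ord_sectionEquation_of_notMem eσ hxU, h.ord_sectionEquation_of_notMem eτ hxU,
      if_neg (hne (hz ▸ eσ trivial)), if_neg (hne (hz' ▸ eτ trivial)), sub_self, sub_self]

end Divisor

section RationalEquivalence

variable {S Y Z : Scheme.{u}}

lemma IsProjLine.cls_mapClosedPoint_eq [IsIntegral S] [Subsingleton S] [IsIntegral Z]
    [IsLocallyNoetherian Z] {q : Z ⟶ S} {U V : Z.Opens} {t : Γ(Z, U)} {w : Γ(Z, V)}
    (h : IsProjLine q t w) (g : Z ⟶ Y) [IsFinite g] {r : Y ⟶ S} (hg : g ≫ r = q) {σ τ : S ⟶ Z}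
    (hσ : σ ≫ q = 𝟙 S) (hτ : τ ≫ q = 𝟙 S) {y : S} {z z' : closedPoints Z} (hz : σ y = z.1)
    (hz' : τ y = z'.1) (hzU : z.1 ∈ U) (hzU' : z'.1 ∈ U) :
    CH₀.cls (mapClosedPoint g z) = CH₀.cls (mapClosedPoint g z') := by
  obtain rfl | hne := eq_or_ne z z'
  · rfl
  have hZ : topologicalKrullDim Z = 1 := h.topologicalKrullDim_eq_one <| by
    by_contra! hgen
    exact hne (Subtype.ext ((hgen z.1).trans (hgen z'.1).symm))
  have generic (x : closedPoints Z) : x.1 ≠ genericPoint Z :=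
    (isClosed_singleton_iff_ne_genericPoint hZ).1 (mem_closedPoints_iff.1 x.2)
  have : Nonempty U := ⟨⟨z.1, hzU⟩⟩
  have eσ : ⊤ ≤ σ ⁻¹ᵁ U := top_le_preimage_of_mem σ (hz ▸ hzU)
  have eτ : ⊤ ≤ τ ⁻¹ᵁ U := top_le_preimage_of_mem τ (hz' ▸ hzU')
  have hmem : ZeroCycle.pushforward g (Finsupp.single z 1 - Finsupp.single z' 1) ∈
      ratEquivZero Y := AddSubgroup.subset_closure
    ⟨Z, inferInstance, inferInstance, g, inferInstance, _, _, hZ,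
      div_ne_zero (h.left.sectionEquation_ne_zero hσ eσ (hz.trans_ne (generic z)))
        (h.left.sectionEquation_ne_zero hτ eτ (hz'.trans_ne (generic z'))),
      h.isDivisorOf_div_sectionEquation hZ hσ hτ eσ eτ hz hz', rfl⟩
  rw [map_sub, pushforward_single g (hz ▸ residueDegree_eq_one (hg.symm ▸ hσ) y),
    pushforward_single g (hz' ▸ residueDegree_eq_one (hg.symm ▸ hτ) y)] at hmem
  exact QuotientAddGroup.eq_iff_sub_mem.2 hmem

end RationalEquivalence

section CoordinatesOnProj

open HomogeneousLocalization

lemma ι_toSpecZero {σ A : Type u} [CommRing A] [SetLike σ A] [AddSubgroupClass σ A]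
    (𝒜 : ℕ → σ) [GradedRing 𝒜] {f : A} {m : ℕ} (hf : f ∈ 𝒜 m) (hm : 0 < m) :
    (Proj.basicOpen 𝒜 f).ι ≫ Proj.toSpecZero 𝒜 = (Proj.basicOpen 𝒜 f).toSpecΓ ≫
      Spec.map (CommRingCat.ofHom (fromZeroRingHom 𝒜 (.powers f)) ≫ Proj.awayToSection 𝒜 f) := by
  have h := Proj.awayι_toSpecZero 𝒜 f hf hm
  rw [Proj.awayι, Category.assoc, Iso.inv_comp_eq, Proj.basicOpenIsoSpec_hom,
    Proj.basicOpenToSpec, Category.assoc, ← Spec.map_comp] at h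
  exact h

lemma ΓSpecIso_inv_appLE_of_ι_comp_eq {T : Scheme.{u}} {R : CommRingCat.{u}} (p : T ⟶ Spec R)
    {U : T.Opens} {φ : R ⟶ Γ(T, U)} (h : U.ι ≫ p = U.toSpecΓ ≫ Spec.map φ) :
    (Scheme.ΓSpecIso R).inv ≫ p.appLE ⊤ U (le_preimage_top p U) = φ := by
  rw [Iso.inv_comp_eq]
  have happ := congrArg Scheme.Hom.appTop h
  rw [Scheme.Hom.comp_appTop, Scheme.Hom.comp_appTop, Scheme.Opens.toSpecΓ_appTop,
    Scheme.ΓSpecIso_naturality_assoc] at happ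
  rw [← Category.assoc, Iso.eq_comp_inv, Category.assoc] at happ
  rw [← happ, Scheme.Opens.ι_appTop, Scheme.Opens.topIso_hom]
  exact congrArg (p.app ⊤ ≫ ·) (T.presheaf.map_comp _ _)

lemma basicOpen_awayToSection_le {σ A : Type u} [CommRing A] [SetLike σ A]
    [AddSubgroupClass σ A] (𝒜 : ℕ → σ) [GradedRing 𝒜] {f : A} {m : ℕ} (hf : f ∈ 𝒜 m) (hm : 0 < m)
    {g : A} {n : ℕ} (hg : g ∈ 𝒜 n) (hn : 0 < n) :
    (Proj 𝒜).basicOpen (Proj.awayToSection 𝒜 f (Away.isLocalizationElem hf hg)) ≤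
      Proj.basicOpen 𝒜 g := by
  have hpre := congrArg ((Proj.basicOpenIsoSpec 𝒜 f hf hm).hom ⁻¹ᵁ ·)
    (Proj.awayι_preimage_basicOpen 𝒜 hf hm hg hn)
  simp only [← Scheme.Hom.comp_preimage, Proj.awayι, Iso.hom_inv_id_assoc] at hpre
  rw [Proj.basicOpenIsoSpec_hom, Proj.basicOpenToSpec] at hpre
  intro x hx
  have hxf : x ∈ Proj.basicOpen 𝒜 f := (Proj 𝒜).basicOpen_le _ hx
  change (⟨x, hxf⟩ : Proj.basicOpen 𝒜 f) ∈ (Proj.basicOpen 𝒜 f).ι ⁻¹ᵁ Proj.basicOpen 𝒜 g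
  rw [hpre]
  exact (Scheme.Opens.toSpecΓ_preimage_basicOpen _ (Proj.awayToSection 𝒜 f
    (Away.isLocalizationElem hf hg))).ge (show (⟨x, hxf⟩ : Proj.basicOpen 𝒜 f) ∈ _ from hx)

lemma germ_awayToSection_mul_germ {σ A : Type u} [CommRing A] [SetLike σ A]
    [AddSubgroupClass σ A] (𝒜 : ℕ → σ) [GradedRing 𝒜] {f g : A} {m : ℕ} (hf : f ∈ 𝒜 m)
    (hg : g ∈ 𝒜 m) (x : Proj 𝒜) (hxf : x ∈ Proj.basicOpen 𝒜 f) (hxg : x ∈ Proj.basicOpen 𝒜 g) :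
    (Proj 𝒜).presheaf.germ _ x hxf (Proj.awayToSection 𝒜 f (Away.isLocalizationElem hf hg)) *
      (Proj 𝒜).presheaf.germ _ x hxg (Proj.awayToSection 𝒜 g (Away.isLocalizationElem hg hf)) =
      1 := by
  have hx : x ∈ Proj.basicOpen 𝒜 (f * g) := by rw [Proj.basicOpen_mul]; exact ⟨hxf, hxg⟩
  have hres_f := congr((Proj 𝒜).presheaf.germ _ x hx
    ($(Proj.awayMap_awayToSection 𝒜 hg rfl) (Away.isLocalizationElem hf hg)))
  have hres_g := congr((Proj 𝒜).presheaf.germ _ x hx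
    ($(Proj.awayMap_awayToSection 𝒜 hf (mul_comm f g)) (Away.isLocalizationElem hg hf)))
  rw [CommRingCat.comp_apply, CommRingCat.comp_apply, TopCat.Presheaf.germ_res_apply]
    at hres_f hres_g
  have hmul : awayMap 𝒜 hg rfl (Away.isLocalizationElem hf hg) *
      awayMap 𝒜 hf (mul_comm f g) (Away.isLocalizationElem hg hf) = 1 := by
    apply val_injective
    rw [val_mul, val_one, awayMap_mk, awayMap_mk, Away.val_mk, Away.val_mk, Localization.mk_mul,
      ← Localization.mk_one, Localization.mk_eq_mk_iff]
    apply Localization.r_of_eq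
    simp only [Submonoid.coe_one, Submonoid.mk_mul_mk]
    ring
  rw [← hres_f, ← hres_g, ← map_mul, ← map_mul]
  refine (congrArg _ (congrArg _ hmul)).trans ?_
  rw [map_one, map_one]

end CoordinatesOnProj

section ProjectiveLineModel

open HomogeneousLocalization

attribute [local instance] MvPolynomial.gradedAlgebra

lemma X_mem_homogeneousSubmodule {n : ℕ} (k : Type u) [Field k] (i : Fin n) :
    (MvPolynomial.X i : MvPolynomial (Fin n) k) ∈ MvPolynomial.homogeneousSubmodule (Fin n) k 1 :=
  MvPolynomial.isHomogeneous_X k i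

lemma exists_algebraMap_eq_of_mem_zero {n : ℕ} (k : Type u) [Field k]
    (a : MvPolynomial.homogeneousSubmodule (Fin n) k 0) : ∃ r : k, algebraMap k _ r = a := by
  obtain ⟨a, ha⟩ := a
  rw [MvPolynomial.homogeneousSubmodule_zero] at ha
  obtain ⟨r, rfl⟩ := Submodule.mem_one.1 ha
  exact ⟨r, rfl⟩

instance (n : ℕ) (k : Type u) [Field k] : IsScalarTower k
    (MvPolynomial.homogeneousSubmodule (Fin n) k 0) (MvPolynomial (Fin n) k) :=
  ⟨fun r a x => smul_mul_assoc r a.1 x⟩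

lemma adjoin_range_X_eq_top {n : ℕ} (k : Type u) [Field k] :
    Algebra.adjoin (MvPolynomial.homogeneousSubmodule (Fin n) k 0)
      (Set.range (MvPolynomial.X : Fin n → MvPolynomial (Fin n) k)) = ⊤ := by
  rw [eq_top_iff]
  intro x _
  have hle : Algebra.adjoin k (Set.range MvPolynomial.X) ≤
      (Algebra.adjoin (MvPolynomial.homogeneousSubmodule (Fin n) k 0)
        (Set.range (MvPolynomial.X : Fin n → MvPolynomial (Fin n) k))).restrictScalars k :=
    Algebra.adjoin_le Algebra.subset_adjoin
  rw [MvPolynomial.adjoin_range_X] at hle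
  exact hle trivial

instance (n : ℕ) (k : Type u) [Field k] : LocallyOfFiniteType (projSpaceStr n k) := by
  have : Algebra.FiniteType (MvPolynomial.homogeneousSubmodule (Fin (n + 1)) k 0)
      (MvPolynomial (Fin (n + 1)) k) := Algebra.FiniteType.of_restrictScalars_finiteType k _ _
  have h : LocallyOfFiniteType (Spec.map (CommRingCat.ofHom (algebraMap k
      (MvPolynomial.homogeneousSubmodule (Fin (n + 1)) k 0)))) := by
    rw [HasRingHomProperty.Spec_iff (P := @LocallyOfFiniteType)]
    exact RingHom.FiniteType.of_surjective _ (exists_algebraMap_eq_of_mem_zero k)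
  exact MorphismProperty.comp_mem _ _ _ (inferInstance : LocallyOfFiniteType (Proj.toSpecZero _)) h

/-- The homogeneous coordinate ring of the projective line, with its grading. -/
abbrev gradingP1 (k : Type u) [Field k] : ℕ → Submodule k (MvPolynomial (Fin (1 + 1)) k) :=
  MvPolynomial.homogeneousSubmodule (Fin (1 + 1)) k

variable (k : Type u) [Field k] {i j : Fin 2}

/-- The coordinate `x_j / x_i` on the standard open subset `x_i ≠ 0` of the projective line. -/
noncomputable def coord (i j : Fin 2) :
    Γ(projSpace 1 k, Proj.basicOpen (gradingP1 k) (MvPolynomial.X i)) :=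
  Proj.awayToSection (gradingP1 k) _ (Away.isLocalizationElem (X_mem_homogeneousSubmodule k i)
    (X_mem_homogeneousSubmodule k j))

lemma ΓSpecIso_inv_appLE_projSpaceStr (i : Fin 2) :
    (Scheme.ΓSpecIso (.of k)).inv ≫ (projSpaceStr 1 k).appLE ⊤
      (Proj.basicOpen (gradingP1 k) (MvPolynomial.X i)) (le_preimage_top _ _) =
    CommRingCat.ofHom (algebraMap k (gradingP1 k 0)) ≫
      CommRingCat.ofHom (fromZeroRingHom (gradingP1 k) (.powers (MvPolynomial.X i))) ≫
        Proj.awayToSection (gradingP1 k) (MvPolynomial.X i) := by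
  refine ΓSpecIso_inv_appLE_of_ι_comp_eq (projSpaceStr 1 k) ?_
  have := ι_toSpecZero (gradingP1 k) (X_mem_homogeneousSubmodule k i) one_pos
  rw [projSpaceStr]
  refine (reassoc_of% this) _ |>.trans ?_
  rw [← Spec.map_comp]
  rfl

lemma mk_prod_pow_eq (hij : i ≠ j) (a : ℕ) (e : Fin 2 → ℕ) (h : ∑ l, e l • 1 = a • 1)
    (h' : ∏ l, MvPolynomial.X l ^ e l ∈ (gradingP1 k) (a • 1)) :
    Away.mk (gradingP1 k) (X_mem_homogeneousSubmodule k i) a (∏ l, MvPolynomial.X l ^ e l) h' =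
      (Away.isLocalizationElem (X_mem_homogeneousSubmodule k i)
        (X_mem_homogeneousSubmodule k j)) ^ e j := by
  apply val_injective
  rw [val_pow, Away.val_mk, Away.val_mk, Localization.mk_pow, Localization.mk_eq_mk_iff]
  apply Localization.r_of_eq
  simp only [smul_eq_mul, mul_one, SubmonoidClass.mk_pow, pow_one] at h ⊢
  subst h
  fin_cases i <;> fin_cases j <;> simp_all [Fin.prod_univ_two, Fin.sum_univ_two] <;> ring

lemma mem_of_isLocalizationElem_mem (hij : i ≠ j)
    (B : Subring (Away (gradingP1 k) (MvPolynomial.X i)))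
    (h₀ : ∀ r : k,
      fromZeroRingHom (gradingP1 k) (.powers (MvPolynomial.X i)) (algebraMap k _ r) ∈ B)
    (h₁ : Away.isLocalizationElem (X_mem_homogeneousSubmodule k i)
      (X_mem_homogeneousSubmodule k j) ∈ B) (y) : y ∈ B := by
  have hy : y ∈ Submodule.span (gradingP1 k 0) _ :=
    (Away.span_mk_prod_pow_eq_top (X_mem_homogeneousSubmodule k i) MvPolynomial.X
      (adjoin_range_X_eq_top k) (fun _ => 1) (X_mem_homogeneousSubmodule k)).ge trivial
  induction hy using Submodule.span_induction with
  | zero => exact zero_mem _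
  | add y z _ _ hy hz => exact add_mem hy hz
  | smul r y _ hy =>
    obtain ⟨r, rfl⟩ := exists_algebraMap_eq_of_mem_zero k r
    rw [Algebra.smul_def]
    exact mul_mem (h₀ r) hy
  | mem y hy =>
    obtain ⟨a, e, he, rfl⟩ := hy
    rw [mk_prod_pow_eq k hij a e he]
    exact pow_mem h₁ _

lemma surjective_eval₂_coord (hij : i ≠ j) :
    Function.Surjective (Polynomial.eval₂RingHom ((projSpaceStr 1 k).appLE ⊤
      (Proj.basicOpen (gradingP1 k) (MvPolynomial.X i)) (le_preimage_top _ _)).hom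
      (coord k i j)) := by
  let φ := (projSpaceStr 1 k).appLE ⊤ (Proj.basicOpen (gradingP1 k) (MvPolynomial.X i))
    (le_preimage_top _ _)
  let ψ : Away (gradingP1 k) (MvPolynomial.X i) →+*
      Γ(projSpace 1 k, Proj.basicOpen (gradingP1 k) (MvPolynomial.X i)) :=
    (Proj.awayToSection (gradingP1 k) (MvPolynomial.X i)).hom
  intro x
  obtain ⟨y, rfl⟩ : ∃ y, ψ y = x :=
    (ConcreteCategory.bijective_of_isIso
      (Proj.basicOpenIsoAway (gradingP1 k) _ (X_mem_homogeneousSubmodule k i) one_pos).hom).2 x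
  refine mem_of_isLocalizationElem_mem k hij
    ((Polynomial.eval₂RingHom φ.hom (coord k i j)).range.comap ψ) (fun r => ?_)
    ⟨Polynomial.X, Polynomial.eval₂_X ..⟩ y
  refine ⟨Polynomial.C ((Scheme.ΓSpecIso (.of k)).inv r), (Polynomial.eval₂_C ..).trans ?_⟩
  exact congr($(ΓSpecIso_inv_appLE_projSpaceStr k i) r)

lemma mem_basicOpen_or_mem_basicOpen (hij : i ≠ j) (x : projSpace 1 k) :
    x ∈ Proj.basicOpen (gradingP1 k) (MvPolynomial.X i) ∨
      x ∈ Proj.basicOpen (gradingP1 k) (MvPolynomial.X j) := by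
  have h := Proj.iSup_basicOpen_eq_top' (gradingP1 k) (MvPolynomial.X)
    (fun i => ⟨1, X_mem_homogeneousSubmodule k i⟩) (adjoin_range_X_eq_top k)
  obtain ⟨l, hl⟩ := TopologicalSpace.Opens.mem_iSup.1 (h.ge (trivial : x ∈ ⊤))
  have : l = i ∨ l = j := by omega
  rcases this with rfl | rfl
  · exact .inl hl
  · exact .inr hl

lemma isProjLine_coord (hij : i ≠ j) :
    IsProjLine (projSpaceStr 1 k) (coord k i j) (coord k j i) where
  left := ⟨Proj.isAffineOpen_basicOpen (gradingP1 k) _ (X_mem_homogeneousSubmodule k i) one_pos,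
    surjective_eval₂_coord k hij⟩
  right := ⟨Proj.isAffineOpen_basicOpen (gradingP1 k) _ (X_mem_homogeneousSubmodule k j) one_pos,
    surjective_eval₂_coord k hij.symm⟩
  mem_or_mem := mem_basicOpen_or_mem_basicOpen k hij
  germ_mul_germ := germ_awayToSection_mul_germ (gradingP1 k) (X_mem_homogeneousSubmodule k i)
    (X_mem_homogeneousSubmodule k j)
  basicOpen_le := basicOpen_awayToSection_le (gradingP1 k) (X_mem_homogeneousSubmodule k j) one_pos
    (X_mem_homogeneousSubmodule k i) one_pos

lemma exists_ne_mem_basicOpen (x : projSpace 1 k) : ∃ i j : Fin 2, i ≠ j ∧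
    x ∈ Proj.basicOpen (gradingP1 k) (MvPolynomial.X i) :=
  (mem_basicOpen_or_mem_basicOpen k zero_ne_one x).elim (⟨0, 1, zero_ne_one, ·⟩)
    (⟨1, 0, one_ne_zero, ·⟩)

end ProjectiveLineModel

section IntegralComponent

lemma isIntegral_image {X Y : Scheme.{u}} (f : X ⟶ Y) [QuasiCompact f] [IsIntegral X] :
    IsIntegral f.image := by
  have hker : f.toImage.ker = ⊥ := by
    refine Scheme.IdealSheafData.ext_of_iSup_eq_top
      (fun U : Y.affineOpens => ⟨f.imageι ⁻¹ᵁ U.1, U.2.preimage _⟩)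
      (TopologicalSpace.IsOpenCover.comap (iSup_affineOpens_eq_top _) _) fun U => ?_
    rw [Scheme.Hom.ker_apply, Scheme.IdealSheafData.ideal_bot, Pi.bot_apply,
      ← RingHom.injective_iff_ker_eq_bot]
    exact f.toImage_app_injective U
  have : IsSchemeTheoreticallyDominant f.toImage := ⟨hker⟩
  have := IsSchemeTheoreticallyDominant.isReduced f.toImage
  have : IrreducibleSpace f.image := by
    rw [irreducibleSpace_def, Set.top_eq_univ, ← f.toImage.denseRange.closure_range,
      ← Set.image_univ]
    exact ((IrreducibleSpace.isIrreducible_univ X).image _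
      f.toImage.continuous.continuousOn).closure
  exact isIntegral_of_irreducibleSpace_of_isReduced _

lemma exists_isIntegralComponent (C : Scheme.{u}) [Nonempty C] :
    ∃ (W : Scheme.{u}) (j : W ⟶ C), IsIntegralComponent j := by
  obtain ⟨x⟩ : Nonempty C := inferInstance
  have hZ := irreducibleComponent_mem_irreducibleComponents x
  have hirr := isIrreducible_irreducibleComponent (x := x)
  let h := C.fromSpecResidueField hirr.genericPoint
  have := isIntegral_image h
  refine ⟨h.image, h.imageι, inferInstance, inferInstance, ?_⟩
  rw [Scheme.IdealSheafData.range_subschemeι, Scheme.Hom.support_ker,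
    Scheme.range_fromSpecResidueField, hirr.genericPoint_closure_eq,
    isClosed_irreducibleComponent.closure_eq]
  exact hZ

end IntegralComponent

section Kappa

/-- The projection `X ×_k k(η_W) ⟶ X`. -/
noncomputable def genericFibreFst {k : Type u} [Field k] {X W : Scheme.{u}} (f : X ⟶ Spec (.of k))
    [IsIntegral W] (ι : W ⟶ X) : genericFibre f ι ⟶ X :=
  pullback.fst f (genericPointStr (ι ≫ f))

lemma isPullback_genericFibre {k : Type u} [Field k] {X W : Scheme.{u}} (f : X ⟶ Spec (.of k))
    [IsIntegral W] (ι : W ⟶ X) :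
    IsPullback (genericFibreFst f ι) (genericFibreStr f ι) f (genericPointStr (ι ≫ f)) :=
  .of_hasPullback ..

lemma HasNormalizationP1.exists_isFinite {k : Type u} [Field k] {W : Scheme.{u}} [IsIntegral W]
    {p : W ⟶ Spec (.of k)} [QuasiSeparated p] (hW : HasNormalizationP1 p) :
    ∃ (n : projSpace 1 k ⟶ W) (η : Spec W.functionField ⟶ projSpace 1 k),
      IsIntegral (projSpace 1 k) ∧ IsFinite n ∧ n ≫ p = projSpaceStr 1 k ∧
        η ≫ n = genericPointInclusion W := by
  have : QuasiSeparatedSpace W := (quasiSeparated_iff_quasiSeparatedSpace p).1 inferInstance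
  obtain ⟨e, he⟩ := hW
  let n := e.inv ≫ (genericPointInclusion W).fromNormalization
  let η := (genericPointInclusion W).toNormalization ≫ e.hom
  have hn : n ≫ p = projSpaceStr 1 k := by rw [Category.assoc, ← he, Iso.inv_hom_id_assoc]
  have : LocallyOfFiniteType n := by
    have : LocallyOfFiniteType (n ≫ p) := hn ▸ inferInstance
    exact locallyOfFiniteType_of_comp n p
  have : Nonempty (projSpace 1 k) := ⟨η (Classical.arbitrary _)⟩
  exact ⟨n, η, isIntegral_of_isOpenImmersion e.inv,
    (IsFinite.iff_isIntegralHom_and_locallyOfFiniteType n).2 ⟨inferInstance, ‹_›⟩, hn,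
    by simp [n, η]⟩

variable {k : Type u} [Field k] [IsAlgClosed k] {S T X Y : Scheme.{u}} {f : X ⟶ Spec (.of k)}
  [LocallyOfFiniteType f] {s : S ⟶ Spec (.of k)} {a : Y ⟶ X} {r : Y ⟶ S}

lemma IsProjLine.exists_cls_eq_baseChange [IsIntegral S] [Subsingleton S] [IsIntegral T]
    {p : T ⟶ Spec (.of k)} {U V : T.Opens} {t : Γ(T, U)} {w : Γ(T, V)} (h : IsProjLine p t w)
    (g : T ⟶ X) [IsFinite g] (hg : g ≫ f = p) (HX : IsPullback a r f s) [IsSeparated r]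
    {η : S ⟶ T} {ρ : S ⟶ Y} (hρ : ρ ≫ r = 𝟙 S) (hρη : ρ ≫ a = η ≫ g) {y : S} (hy : η y ∈ U) :
    ∃ x : closedPoints X, x.1 ∈ Set.range g ∧
      CH₀.cls (closedPointOfSection r ρ hρ) = CH₀.baseChange HX (CH₀.cls x) := by
  have : LocallyOfFiniteType p := hg ▸ inferInstance
  have : JacobsonSpace T := LocallyOfFiniteType.jacobsonSpace p
  have : IsLocallyNoetherian T := LocallyOfFiniteType.isLocallyNoetherian p
  obtain ⟨t₁, ht₁⟩ : ∃ t₁ : closedPoints T, t₁.1 ∈ U :=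
    have ⟨t₁, hU, h⟩ := nonempty_inter_closedPoints ⟨η y, hy⟩ U.isOpen.isLocallyClosed
    ⟨⟨t₁, h⟩, hU⟩
  let π := pullback.fst g a
  let g' := pullback.snd g a
  have H : IsPullback π (g' ≫ r) p s := hg ▸
    ((IsPullback.of_hasPullback g a).flip.paste_horiz HX.flip).flip
  have := isIntegral_of_isPullback H
  have := isLocallyNoetherian_of_isPullback H
  let σ : S ⟶ pullback g a := pullback.lift η ρ hρη.symm
  have hσ : σ ≫ g' ≫ r = 𝟙 S := by rw [pullback.lift_snd_assoc, hρ]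
  let zσ : closedPoints (pullback g a : Scheme.{u}) := closedPointOfSection (g' ≫ r) σ hσ
  have hzσ : mapClosedPoint g' zσ = closedPointOfSection r ρ hρ :=
    Subtype.ext congr($(pullback.lift_snd η ρ hρη.symm) _)
  refine ⟨mapClosedPoint g t₁, ⟨t₁, rfl⟩, ?_⟩
  rw [CH₀.baseChange_cls, ← mapClosedPoint_baseChangePoint H HX pullback.condition.symm, ← hzσ]
  refine (h.of_isPullback H).cls_mapClosedPoint_eq g' rfl hσ (constantSection_comp_snd H t₁) rfl
    rfl ?_ ?_
  · rw [Subsingleton.elim y (Classical.arbitrary S), ← pullback.lift_fst η ρ hρη.symm] at hy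
    exact hy
  · rwa [← apply_baseChangePoint H t₁] at ht₁

variable (f) [IsSeparated f] {W : Scheme.{u}} [IsIntegral W] (ι : W ⟶ X)

lemma constantPoint_eq_baseChangePoint (x₀ : closedPoints X) :
    constantPoint f ι x₀ = baseChangePoint (isPullback_genericFibre f ι) x₀ := by
  refine ((baseChangePoint_eq_iff _).2 ?_).symm
  exact (congrArg (fun g : Spec W.functionField ⟶ X => g (Classical.arbitrary _))
    (pullback.lift_fst ..)).trans (rationalPoint_apply f x₀ _)

lemma kappa_eq_zero_of_hasNormalizationP1 [IsClosedImmersion ι] (hW : HasNormalizationP1 (ι ≫ f))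
    {x₀ : closedPoints X} (hx₀ : ∀ x : closedPoints X, x.1 ∈ Set.range ι →
      CH₀.cls x = CH₀.cls x₀) : kappa f ι x₀ = 0 := by
  obtain ⟨n, η, _, _, hn, hη⟩ := hW.exists_isFinite
  obtain ⟨i, j, hij, hy⟩ := exists_ne_mem_basicOpen k (η (Classical.arbitrary _))
  obtain ⟨x, ⟨y, hx⟩, hgraph⟩ : ∃ x : closedPoints X, x.1 ∈ Set.range (n ≫ ι) ∧
      CH₀.cls (graphPoint f ι) =
        CH₀.baseChange (isPullback_genericFibre f ι) (CH₀.cls x) :=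
    (isProjLine_coord k hij).exists_cls_eq_baseChange (n ≫ ι) ((Category.assoc ..).trans hn) _ _
      ((pullback.lift_fst ..).trans (by rw [reassoc_of% hη])) hy
  rw [kappa, sub_eq_zero, hgraph, hx₀ x ⟨n y, hx⟩, CH₀.baseChange_cls,
    constantPoint_eq_baseChangePoint]

lemma kappa_eq_zero_of_isRationalCurve {C : Scheme.{u}} {i : C ⟶ X} (hC : IsRationalCurve f i)
    {x₀ : closedPoints X} (hx₀ : ∀ x : closedPoints X, x.1 ∈ Set.range i →
      CH₀.cls x = CH₀.cls x₀) {j : W ⟶ C} (hj : IsIntegralComponent j) :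
    kappa f (j ≫ i) x₀ = 0 := by
  have := hC.isCurve.isClosedImmersion
  have := hj.isClosedImmersion
  refine kappa_eq_zero_of_hasNormalizationP1 f (j ≫ i) ?_ ?_
  · simpa only [Category.assoc] using hC.normalization W j hj
  · rintro x ⟨y, hy⟩
    exact hx₀ x ⟨j y, hy⟩

lemma cccOrder_eq_one {C : Scheme.{u}} [Nonempty C] {i : C ⟶ X}
    {x₀ : closedPoints X} (h : ∀ (W : Scheme.{u}) (j : W ⟶ C) (hj : IsIntegralComponent j),
      haveI := hj.isIntegral; kappa f (j ≫ i) x₀ = 0) :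
    cccOrder f i x₀ = 1 := by
  obtain ⟨W, j, hj⟩ := exists_isIntegralComponent C
  have hone : {n | ∃ (W : Scheme.{u}) (j : W ⟶ C) (hj : IsIntegralComponent j),
      haveI := hj.isIntegral; n = addOrderOf (kappa f (j ≫ i) x₀)} = {1} := by
    refine Set.eq_singleton_iff_unique_mem.2 ⟨⟨W, j, hj, ?_⟩, ?_⟩
    · rw [h W j hj, addOrderOf_zero]
    · rintro n ⟨W, j, hj, rfl⟩
      rw [h W j hj, addOrderOf_zero]
  rw [cccOrder, hone, csSup_singleton]

end Kappa

end K3CCC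

theorem rational_curve_is_ccc_of_order_one_general (k : Type u) [Field k] [IsAlgClosed k]
    (X : Scheme.{u}) (f : X ⟶ Spec (.of k)) [IsSeparated f] [LocallyOfFiniteType f]
    (C : Scheme.{u}) (i : C ⟶ X) (hC : K3CCC.IsRationalCurve f i) (x₀ : closedPoints X)
    (hx₀ : ∀ x : closedPoints X, x.1 ∈ Set.range i → K3CCC.CH₀.cls x = K3CCC.CH₀.cls x₀) :
    K3CCC.IsConstantCycleCurve f i x₀ ∧ K3CCC.cccOrder f i x₀ = 1 := by
  have := hC.isCurve.nonempty
  have hκ (W : Scheme.{u}) (j : W ⟶ C) (hj : K3CCC.IsIntegralComponent j) :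
      haveI := hj.isIntegral; K3CCC.kappa f (j ≫ i) x₀ = 0 :=
    haveI := hj.isIntegral; K3CCC.kappa_eq_zero_of_isRationalCurve f hC hx₀ hj
  refine ⟨fun W j hj => ?_, K3CCC.cccOrder_eq_one f hκ⟩
  have := hj.isIntegral
  exact (hκ W j hj).symm ▸ .zero

/-- Let `X` be a projective K3 surface over an algebraically closed field `k` with Beauville–Voisin
class `c`. Every rational curve `C ⊂ X` is a constant cycle curve of order one, for every choice of
the closed point `x₀` with `[x₀] = c` in the definition of `κ_C`. -/
theorem rational_curve_is_ccc_of_order_one (k : Type u) [Field k] [IsAlgClosed k]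
    (X : Scheme.{u}) (f : X ⟶ Spec (.of k)) [K3CCC.IsProjectiveK3 f]
    (c : K3CCC.CH₀ X) (hc : K3CCC.IsBeauvilleVoisinClass f c)
    (C : Scheme.{u}) (i : C ⟶ X) (hC : K3CCC.IsRationalCurve f i)
    (x₀ : closedPoints X) (hx₀ : K3CCC.CH₀.cls x₀ = c) :
    K3CCC.IsConstantCycleCurve f i x₀ ∧ K3CCC.cccOrder f i x₀ = 1 :=
  rational_curve_is_ccc_of_order_one_general k X f C i hC x₀ fun x hx =>
    (hc.eq_of_rational C i hC x hx).trans hx₀.symm
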